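/- arXiv:2508.21671 — 3 statements merged into one kernel-verified Lean document; each statement's English description precedes it below -/
import Mathlib

section
/- Let p be a prime with p > 5 and let (x, y, z) ∈ 𝔽_p³ satisfy x² + y² + z² − xyz ≠ 4. Then the number of pairs (A, B) ∈ SL(2, 𝔽_p) × SL(2, 𝔽_p) with tr(A) = x, tr(B) = y, and tr(AB) = z equals p(p² − 1). -/
/-!
The argument works over every finite field `F` of order `q`, and for pairs of `2 × 2` matrices with
arbitrary prescribed determinants. The nonvanishing hypothesis says that `A * B - B * A` is
invertible, so `1, A, B, A * B` is a basis of the matrix algebra. By Cayley–Hamilton its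
multiplication table depends only on the traces and determinants of `A`, `B` and on `tr (A * B)`,
so two pairs with the same invariants differ by an algebra automorphism, which is inner. Hence
`GL₂(F)` acts transitively on the pairs with given invariants, with stabilizer the scalars, and
the count is `|GL₂(F)| / |Fˣ| = q (q² - 1)` as soon as one such pair exists. If the characteristic
polynomial prescribed for `A` has a root, a triangular `A` gives a pair; otherwise, fixing `A` to be
its companion matrix, the possible `B` are the points of an affine conic without points at infinity,
and Chevalley's theorem provides one.
-/

open Matrix MulAction

section FiniteField

variable {F : Type*} [Field F] [Finite F]

theorem exists_ne_zero_eval_eq_zero {σ : Type*} [Fintype σ] {f : MvPolynomial σ F}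
    (hdeg : f.totalDegree < Fintype.card σ) (hf : MvPolynomial.eval 0 f = 0) :
    ∃ v ≠ 0, MvPolynomial.eval v f = 0 := by
  classical
  have := Fintype.ofFinite F
  obtain ⟨p, hchar⟩ := CharP.exists F
  have hdvd : p ∣ Fintype.card {v : σ → F // MvPolynomial.eval v f = 0} :=
    char_dvd_card_solutions p hdeg
  have hpos : 0 < Fintype.card {v : σ → F // MvPolynomial.eval v f = 0} :=
    Fintype.card_pos_iff.mpr ⟨⟨0, hf⟩⟩
  have hlt : 1 < Fintype.card {v : σ → F // MvPolynomial.eval v f = 0} :=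
    (CharP.char_is_prime F p).one_lt.trans_le (Nat.le_of_dvd hpos hdvd)
  obtain ⟨⟨v, hv⟩, hne⟩ := Fintype.exists_ne_of_one_lt_card hlt ⟨0, hf⟩
  exact ⟨v, fun h => hne (Subtype.ext h), hv⟩

theorem exists_ne_zero_dotProduct_mulVec_eq_zero {n : Type*} [Fintype n]
    (hn : 2 < Fintype.card n) (M : Matrix n n F) : ∃ v ≠ 0, v ⬝ᵥ M *ᵥ v = 0 := by
  let f : MvPolynomial n F := ∑ i, ∑ j, .C (M i j) * (.X i * .X j)
  have hhom : f.IsHomogeneous 2 :=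
    .sum _ _ _ fun i _ => .sum _ _ _ fun j _ =>
      .C_mul ((MvPolynomial.isHomogeneous_X F i).mul (MvPolynomial.isHomogeneous_X F j)) _
  have heval (v : n → F) : MvPolynomial.eval v f = v ⬝ᵥ M *ᵥ v := by
    simp only [f, map_sum, map_mul, MvPolynomial.eval_C, MvPolynomial.eval_X, dotProduct, mulVec,
      Finset.mul_sum]
    exact Finset.sum_congr rfl fun i _ => Finset.sum_congr rfl fun j _ => by ring
  simpa only [heval] using
    exists_ne_zero_eval_eq_zero (hhom.totalDegree_le.trans_lt hn) (by rw [heval, zero_dotProduct])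

theorem card_GL_fin_two : Nat.card (GL (Fin 2) F) =
    (Nat.card F ^ 2 - 1) * (Nat.card F ^ 2 - Nat.card F) := by
  have := Fintype.ofFinite F
  simp [card_GL_field, Fin.prod_univ_two]

end FiniteField

section Algebra

variable {K S : Type*} [Field K] [Ring S] [Algebra K S] {a b : S}

theorem linearIndependent_one_self_of_not_commute (h : ¬Commute a b) :
    LinearIndependent K ![1, a] := by
  refine LinearIndependent.pair_iff.mpr fun r s hrs => ?_
  have hs : s = 0 := by
    by_contra hs
    have hsa : s • a = algebraMap K S (-r) := by
      rw [eq_neg_of_add_eq_zero_right hrs, Algebra.algebraMap_eq_smul_one, neg_smul]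
    have hcomm : Commute (s • a) b := hsa ▸ Algebra.commutes (-r) b
    exact h ((Commute.smul_left_iff₀ hs).mp hcomm)
  have : Nontrivial S := ⟨_, _, h⟩
  exact ⟨by simpa [hs] using hrs, hs⟩

/-- The words `1, a, b, a * b`: a basis of the `2 × 2` matrices when `a * b - b * a` is invertible. -/
def words (a b : S) : Fin 4 → S := ![1, a, b, a * b]

theorem linearIndependent_words [Nontrivial S] (h : IsUnit (a * b - b * a)) :
    LinearIndependent K (words a b) := by
  have hnc : ¬Commute a b := fun hab => h.ne_zero (sub_eq_zero.mpr hab)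
  have hli : ∀ r s : K, r • (1 : S) + s • a = 0 → r = 0 ∧ s = 0 :=
    LinearIndependent.pair_iff.mp (linearIndependent_one_self_of_not_commute hnc)
  refine Fintype.linearIndependent_iff.mpr fun c hc => ?_
  replace hc : c 0 • (1 : S) + c 1 • a + c 2 • b + c 3 • (a * b) = 0 := by
    simpa [words, Fin.sum_univ_four] using hc
  -- Commuting the relation with `a` kills its first two terms.
  have hcomm : (c 2 • (1 : S) + c 3 • a) * (a * b - b * a) = 0 :=
    calc (c 2 • (1 : S) + c 3 • a) * (a * b - b * a)
      _ = a * (c 0 • (1 : S) + c 1 • a + c 2 • b + c 3 • (a * b))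
          - (c 0 • (1 : S) + c 1 • a + c 2 • b + c 3 • (a * b)) * a := by
        simp only [mul_add, add_mul, mul_sub, smul_mul_assoc, mul_smul_comm, one_mul, mul_one,
          mul_assoc]
        abel
      _ = 0 := by rw [hc, mul_zero, zero_mul, sub_zero]
  obtain ⟨h2, h3⟩ := hli _ _ (h.mul_left_eq_zero.mp hcomm)
  obtain ⟨h0, h1⟩ := hli (c 0) (c 1) (by simpa only [h2, h3, zero_smul, add_zero] using hc)
  intro i
  fin_cases i <;> assumption

end Algebra

theorem exists_conjAct_smul_eq_algEquiv {n K : Type*} [Fintype n] [DecidableEq n] [Field K]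
    (f : Matrix n n K ≃ₐ[K] Matrix n n K) : ∃ g : ConjAct (GL n K), ∀ M, g • M = f M := by
  obtain ⟨T, hT⟩ := Module.End.mulSemiringActionToAlgEquiv_conjAct_surjective (K := K) (V := n → K)
    ((toLinAlgEquiv'.symm.trans f).trans toLinAlgEquiv')
  obtain ⟨g, hg⟩ := GeneralLinearGroup.toLin.surjective (ConjAct.ofConjAct T)
  refine ⟨ConjAct.toConjAct g, fun M => toLinAlgEquiv'.injective ?_⟩
  calc toLinAlgEquiv' (ConjAct.toConjAct g • M) = T • toLinAlgEquiv' M := by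
        simp only [ConjAct.units_smul_def, ConjAct.ofConjAct_toConjAct, map_mul, ← hg]
        rfl
    _ = toLinAlgEquiv' (f M) := by
        simpa using DFunLike.congr_fun hT (toLinAlgEquiv' M)

section CommRing

variable {R : Type*} [CommRing R]

theorem card_center_GL {n : Type*} [Fintype n] [DecidableEq n] [Nonempty n] :
    Nat.card (Subgroup.center (GL n R)) = Nat.card Rˣ := by
  have hinj : Function.Injective (GeneralLinearGroup.scalar n : Rˣ →* GL n R) := fun r s hrs =>
    Units.ext (scalar_inj.mp (congrArg Units.val hrs))
  rw [GeneralLinearGroup.center_eq_range_scalar]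
  exact (Nat.card_congr (MonoidHom.ofInjective hinj).toEquiv).symm

theorem mul_self_fin_two (A : Matrix (Fin 2) (Fin 2) R) :
    A * A = A.trace • A - A.det • 1 := by
  ext i j
  fin_cases i <;> fin_cases j <;>
    simp [mul_apply, Fin.sum_univ_two, trace_fin_two, det_fin_two] <;> ring

theorem mul_swap_fin_two (A B : Matrix (Fin 2) (Fin 2) R) : B * A =
    A.trace • B + B.trace • A + ((A * B).trace - A.trace * B.trace) • 1 - A * B := by
  ext i j
  fin_cases i <;> fin_cases j <;>
    simp [mul_apply, Fin.sum_univ_two, trace_fin_two] <;> ring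

/-- The pairs of `2 × 2` matrices `(A, B)` with `det A = d`, `det B = e`, `tr A = x`, `tr B = y`
and `tr (A * B) = z`; for `d = e = 1` this is the tower `E(x, y, z)`. -/
def traceTower (d e x y z : R) : Set (Matrix (Fin 2) (Fin 2) R × Matrix (Fin 2) (Fin 2) R) :=
  {P | P.1.det = d ∧ P.2.det = e ∧ P.1.trace = x ∧ P.2.trace = y ∧ (P.1 * P.2).trace = z}

/-- The polynomial whose value at the invariants of a pair `(A, B)` is `det (A * B - B * A)`. -/
def commutatorDet (d e x y z : R) : R :=
  4 * d * e - e * x ^ 2 - d * y ^ 2 - z ^ 2 + x * y * z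

namespace traceTower

variable {d e x y z : R} {P : Matrix (Fin 2) (Fin 2) R × Matrix (Fin 2) (Fin 2) R}

theorem det_commutator (hP : P ∈ traceTower d e x y z) :
    (P.1 * P.2 - P.2 * P.1).det = commutatorDet d e x y z := by
  obtain ⟨rfl, rfl, rfl, rfl, rfl⟩ := hP
  simp only [commutatorDet, det_fin_two, trace_fin_two, mul_apply, Matrix.sub_apply,
    Fin.sum_univ_two]
  ring

theorem smul_mem (hP : P ∈ traceTower d e x y z) (g : ConjAct (GL (Fin 2) R)) :
    g • P ∈ traceTower d e x y z := by
  obtain ⟨rfl, rfl, rfl, rfl, rfl⟩ := hP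
  refine ⟨det_units_conj _ _, det_units_conj _ _, trace_units_conj _ _, trace_units_conj _ _, ?_⟩
  rw [Prod.smul_fst, Prod.smul_snd, ← smul_mul']
  exact trace_units_conj _ _

theorem fst_mul_fst (hP : P ∈ traceTower d e x y z) : P.1 * P.1 = x • P.1 - d • 1 := by
  obtain ⟨rfl, -, rfl, -, -⟩ := hP
  exact mul_self_fin_two _

theorem snd_mul_snd (hP : P ∈ traceTower d e x y z) : P.2 * P.2 = y • P.2 - e • 1 := by
  obtain ⟨-, rfl, -, rfl, -⟩ := hP
  exact mul_self_fin_two _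

theorem snd_mul_fst (hP : P ∈ traceTower d e x y z) :
    P.2 * P.1 = x • P.2 + y • P.1 + (z - x * y) • 1 - P.1 * P.2 := by
  obtain ⟨-, -, rfl, rfl, rfl⟩ := hP
  exact mul_swap_fin_two _ _

theorem snd_mul_fst_mul_snd (hP : P ∈ traceTower d e x y z) :
    P.2 * (P.1 * P.2) = z • P.2 + e • P.1 - (x * e) • 1 := by
  rw [← mul_assoc, snd_mul_fst hP]
  simp only [sub_mul, add_mul, smul_mul_assoc, one_mul, mul_assoc, snd_mul_snd hP, mul_sub,
    mul_smul_comm, mul_one]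
  module

theorem nonempty_of_conic_point (a c : R)
    (h : a ^ 2 + x * a * c + d * c ^ 2 - y * a + (z - x * y) * c + e = 0) :
    (traceTower d e x y z).Nonempty := by
  refine ⟨(!![0, -d; 1, x], !![a, z + d * c - x * (y - a); c, y - a]), ?_⟩
  simp only [traceTower, Set.mem_ofPred_eq, det_fin_two_of, trace_fin_two_of, mul_fin_two]
  refine ⟨by ring, by linear_combination -h, by ring, by ring, by ring⟩

/-- The tower of pairs in `SL₂` is `traceTower 1 1`, with the determinant conditions bundled. -/
def equivSpecialLinearGroup (x y z : R) :
    {AB : SpecialLinearGroup (Fin 2) R × SpecialLinearGroup (Fin 2) R //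
      trace (AB.1 : Matrix (Fin 2) (Fin 2) R) = x ∧ trace (AB.2 : Matrix (Fin 2) (Fin 2) R) = y ∧
      trace ((AB.1 * AB.2 : SpecialLinearGroup (Fin 2) R) : Matrix (Fin 2) (Fin 2) R) = z} ≃
    traceTower 1 1 x y z where
  toFun AB := ⟨(AB.1.1, AB.1.2), AB.1.1.det_coe, AB.1.2.det_coe, AB.2⟩
  invFun P := ⟨(⟨P.1.1, P.2.1⟩, ⟨P.1.2, P.2.2.1⟩), P.2.2.2⟩

end traceTower

end CommRing

namespace traceTower

variable {F : Type*} [Field F] {d e x y z : F}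
  {P Q : Matrix (Fin 2) (Fin 2) F × Matrix (Fin 2) (Fin 2) F}

theorem nonempty_of_charpoly_root (hdet : commutatorDet d e x y z ≠ 0) {r : F}
    (hr : r ^ 2 - x * r + d = 0) : (traceTower d e x y z).Nonempty := by
  -- For `A = !![r, 1; 0, x - r]` and `a = B 0 0`, the condition on `tr (A * B)` forces this value
  -- of `B 1 0`; if it is nonzero, then `det B = e` can be solved for `B 0 1`.
  obtain ⟨a, ha⟩ : ∃ a, z - (x - r) * y - (2 * r - x) * a ≠ 0 := by
    by_contra! h
    have hz : z = (x - r) * y := by linear_combination h 0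
    have hx : x = 2 * r := by linear_combination h 1 - h 0
    have hd : d = r ^ 2 := by linear_combination hr + r * hx
    subst hd hx hz
    exact hdet (by rw [commutatorDet]; ring)
  set c := z - (x - r) * y - (2 * r - x) * a with hc
  refine ⟨(!![r, 1; 0, x - r], !![a, (a * (y - a) - e) / c; c, y - a]), ?_⟩
  simp only [traceTower, Set.mem_ofPred_eq, det_fin_two_of, trace_fin_two_of, mul_fin_two]
  refine ⟨by linear_combination -hr, by field_simp; ring, by ring, by ring, by rw [hc]; ring⟩

theorem nonempty_of_commutatorDet_ne_zero [Finite F] (hdet : commutatorDet d e x y z ≠ 0) :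
    (traceTower d e x y z).Nonempty := by
  obtain ⟨v, hv0, hv⟩ := exists_ne_zero_dotProduct_mulVec_eq_zero (by simp)
    !![1, x, -y; 0, d, z - x * y; 0, 0, e]
  replace hv : v 0 ^ 2 + x * v 0 * v 1 + d * v 1 ^ 2 - y * v 0 * v 2 + (z - x * y) * v 1 * v 2
      + e * v 2 ^ 2 = 0 := by
    simp only [dotProduct, mulVec, of_apply, cons_val', cons_val_fin_one, Fin.sum_univ_three,
      cons_val_zero, cons_val_one, cons_val] at hv
    linear_combination hv
  by_cases h2 : v 2 = 0
  · have h1 : v 1 ≠ 0 := by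
      intro h1
      have h0 : v 0 = 0 := by simpa [h1, h2] using hv
      exact hv0 (funext fun i => by fin_cases i <;> assumption)
    refine nonempty_of_charpoly_root hdet (r := -v 0 / v 1) ?_
    rw [h2] at hv
    field_simp
    linear_combination hv
  · refine nonempty_of_conic_point (v 0 / v 2) (v 1 / v 2) ?_
    field_simp
    linear_combination hv

theorem isUnit_commutator (hdet : commutatorDet d e x y z ≠ 0) (hP : P ∈ traceTower d e x y z) :
    IsUnit (P.1 * P.2 - P.2 * P.1) := by
  rwa [isUnit_iff_isUnit_det, det_commutator hP, isUnit_iff_ne_zero]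

/-- The basis `1, A, B, A * B` of the matrix algebra attached to a pair `(A, B)` with invertible
commutator. -/
noncomputable def wordsBasis (hunit : IsUnit (P.1 * P.2 - P.2 * P.1)) :
    Module.Basis (Fin 4) F (Matrix (Fin 2) (Fin 2) F) :=
  basisOfLinearIndependentOfCardEqFinrank (linearIndependent_words hunit)
    (by simp [Module.finrank_matrix])

theorem coe_wordsBasis (hunit : IsUnit (P.1 * P.2 - P.2 * P.1)) :
    ⇑(wordsBasis hunit) = words P.1 P.2 :=
  coe_basisOfLinearIndependentOfCardEqFinrank _ _

variable {φ : Matrix (Fin 2) (Fin 2) F →ₗ[F] Matrix (Fin 2) (Fin 2) F}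

theorem map_fst_mul (hdet : commutatorDet d e x y z ≠ 0) (hP : P ∈ traceTower d e x y z)
    (hQ : Q ∈ traceTower d e x y z) (hφ : ∀ i, φ (words P.1 P.2 i) = words Q.1 Q.2 i)
    (M : Matrix (Fin 2) (Fin 2) F) : φ (P.1 * M) = Q.1 * φ M := by
  obtain ⟨hφ1, hφA, hφB, hφAB⟩ : φ 1 = 1 ∧ φ P.1 = Q.1 ∧ φ P.2 = Q.2 ∧ φ (P.1 * P.2) = Q.1 * Q.2 :=
    ⟨hφ 0, hφ 1, hφ 2, hφ 3⟩
  suffices φ ∘ₗ LinearMap.mulLeft F P.1 = LinearMap.mulLeft F Q.1 ∘ₗ φ from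
    LinearMap.congr_fun this M
  refine (wordsBasis (isUnit_commutator hdet hP)).ext fun i => ?_
  rw [coe_wordsBasis]
  fin_cases i <;>
    simp [words, hφ1, hφA, hφB, hφAB, fst_mul_fst hP, fst_mul_fst hQ, ← mul_assoc, sub_mul]

theorem map_snd_mul (hdet : commutatorDet d e x y z ≠ 0) (hP : P ∈ traceTower d e x y z)
    (hQ : Q ∈ traceTower d e x y z) (hφ : ∀ i, φ (words P.1 P.2 i) = words Q.1 Q.2 i)
    (M : Matrix (Fin 2) (Fin 2) F) : φ (P.2 * M) = Q.2 * φ M := by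
  obtain ⟨hφ1, hφA, hφB, hφAB⟩ : φ 1 = 1 ∧ φ P.1 = Q.1 ∧ φ P.2 = Q.2 ∧ φ (P.1 * P.2) = Q.1 * Q.2 :=
    ⟨hφ 0, hφ 1, hφ 2, hφ 3⟩
  suffices φ ∘ₗ LinearMap.mulLeft F P.2 = LinearMap.mulLeft F Q.2 ∘ₗ φ from
    LinearMap.congr_fun this M
  refine (wordsBasis (isUnit_commutator hdet hP)).ext fun i => ?_
  rw [coe_wordsBasis]
  fin_cases i <;>
    simp [words, hφ1, hφA, hφB, hφAB, snd_mul_fst hP, snd_mul_fst hQ, snd_mul_snd hP,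
      snd_mul_snd hQ, snd_mul_fst_mul_snd hP, snd_mul_fst_mul_snd hQ]

theorem map_mul_of_map_words (hdet : commutatorDet d e x y z ≠ 0) (hP : P ∈ traceTower d e x y z)
    (hQ : Q ∈ traceTower d e x y z) (hφ : ∀ i, φ (words P.1 P.2 i) = words Q.1 Q.2 i)
    (M N : Matrix (Fin 2) (Fin 2) F) : φ (M * N) = φ M * φ N := by
  suffices φ ∘ₗ LinearMap.mulRight F N = LinearMap.mulRight F (φ N) ∘ₗ φ from
    LinearMap.congr_fun this M
  have hA := map_fst_mul hdet hP hQ hφ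
  have hB := map_snd_mul hdet hP hQ hφ
  refine (wordsBasis (isUnit_commutator hdet hP)).ext fun i => ?_
  rw [coe_wordsBasis, LinearMap.comp_apply, LinearMap.comp_apply, hφ]
  fin_cases i <;> simp [words, hA, hB, mul_assoc]

theorem exists_conjAct_smul_eq (hdet : commutatorDet d e x y z ≠ 0)
    (hP : P ∈ traceTower d e x y z) (hQ : Q ∈ traceTower d e x y z) :
    ∃ g : ConjAct (GL (Fin 2) F), g • P = Q := by
  let φ := (wordsBasis (isUnit_commutator hdet hP)).equiv
    (wordsBasis (isUnit_commutator hdet hQ)) (Equiv.refl _)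
  have hφ (i) : φ (words P.1 P.2 i) = words Q.1 Q.2 i := by
    rw [← coe_wordsBasis (isUnit_commutator hdet hP), ← coe_wordsBasis (isUnit_commutator hdet hQ)]
    exact Module.Basis.equiv_apply ..
  obtain ⟨g, hg⟩ := exists_conjAct_smul_eq_algEquiv
    (AlgEquiv.ofLinearEquiv φ (hφ 0) (map_mul_of_map_words (φ := φ) hdet hP hQ hφ))
  exact ⟨g, Prod.ext ((hg P.1).trans (hφ 1)) ((hg P.2).trans (hφ 2))⟩

theorem orbit_eq (hdet : commutatorDet d e x y z ≠ 0) (hP : P ∈ traceTower d e x y z) :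
    orbit (ConjAct (GL (Fin 2) F)) P = traceTower d e x y z := by
  ext Q
  refine ⟨?_, exists_conjAct_smul_eq hdet hP⟩
  rintro ⟨g, rfl⟩
  exact smul_mem hP g

theorem mem_center_iff_commute (hunit : IsUnit (P.1 * P.2 - P.2 * P.1)) {g : GL (Fin 2) F} :
    g ∈ Subgroup.center (GL (Fin 2) F) ↔ Commute g.val P.1 ∧ Commute g.val P.2 := by
  rw [GeneralLinearGroup.mem_center_iff_val_mem_range_scalar]
  constructor
  · rintro ⟨r, hr⟩
    rw [← hr]
    exact ⟨scalar_commute r (Commute.all r) _, scalar_commute r (Commute.all r) _⟩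
  · rintro ⟨hA, hB⟩
    have hcomm : LinearMap.mulLeft F g.val = LinearMap.mulRight F g.val := by
      refine (wordsBasis hunit).ext fun i => ?_
      rw [coe_wordsBasis]
      fin_cases i
      exacts [Commute.one_right _, hA, hB, hA.mul_right hB]
    exact mem_range_scalar_iff_commute_single'.mpr fun i j => (LinearMap.congr_fun hcomm _).symm

theorem mem_stabilizer_iff_mem_center (hunit : IsUnit (P.1 * P.2 - P.2 * P.1))
    {g : ConjAct (GL (Fin 2) F)} :
    g ∈ stabilizer (ConjAct (GL (Fin 2) F)) P ↔
      ConjAct.ofConjAct g ∈ Subgroup.center (GL (Fin 2) F) := by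
  simp only [mem_stabilizer_iff, Prod.ext_iff, Prod.smul_fst, Prod.smul_snd,
    ConjAct.units_smul_def, Units.mul_inv_eq_iff_eq_mul, mem_center_iff_commute hunit]
  rfl

theorem card_stabilizer (hunit : IsUnit (P.1 * P.2 - P.2 * P.1)) :
    Nat.card (stabilizer (ConjAct (GL (Fin 2) F)) P) = Nat.card Fˣ := by
  rw [← card_center_GL (n := Fin 2)]
  exact Nat.card_congr
    (ConjAct.ofConjAct.toEquiv.subtypeEquiv fun _ => mem_stabilizer_iff_mem_center hunit)

theorem card_of_commutatorDet_ne_zero [Finite F] (hdet : commutatorDet d e x y z ≠ 0) :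
    Nat.card (traceTower d e x y z) = Nat.card F * (Nat.card F ^ 2 - 1) := by
  obtain ⟨P, hP⟩ := nonempty_of_commutatorDet_ne_zero hdet
  have hunits : 0 < Nat.card F - 1 := Nat.sub_pos_of_lt Finite.one_lt_card
  refine Nat.eq_of_mul_eq_mul_right hunits ?_
  calc Nat.card (traceTower d e x y z) * (Nat.card F - 1)
    _ = (stabilizer (ConjAct (GL (Fin 2) F)) P).index *
          Nat.card (stabilizer (ConjAct (GL (Fin 2) F)) P) := by
      rw [index_stabilizer, orbit_eq hdet hP, Nat.card_coe_set_eq,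
        card_stabilizer (isUnit_commutator hdet hP), Nat.card_units]
    _ = Nat.card (GL (Fin 2) F) := Subgroup.index_mul_card _
    _ = Nat.card F * (Nat.card F ^ 2 - 1) * (Nat.card F - 1) := by
      rw [card_GL_fin_two, sq (Nat.card F), ← Nat.mul_sub_one]
      ring

end traceTower

theorem tower_card_general {F : Type*} [Field F] [Finite F] (x y z : F)
    (hns : x ^ 2 + y ^ 2 + z ^ 2 - x * y * z ≠ 4) :
    Nat.card {AB : SpecialLinearGroup (Fin 2) F × SpecialLinearGroup (Fin 2) F //
      trace (AB.1 : Matrix (Fin 2) (Fin 2) F) = x ∧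
      trace (AB.2 : Matrix (Fin 2) (Fin 2) F) = y ∧
      trace ((AB.1 * AB.2 : SpecialLinearGroup (Fin 2) F) : Matrix (Fin 2) (Fin 2) F) = z} =
    Nat.card F * (Nat.card F ^ 2 - 1) := by
  have hdet : commutatorDet 1 1 x y z ≠ 0 := by
    rw [show commutatorDet 1 1 x y z = 4 - (x ^ 2 + y ^ 2 + z ^ 2 - x * y * z) by
      rw [commutatorDet]; ring]
    exact sub_ne_zero.mpr hns.symm
  rw [Nat.card_congr (traceTower.equivSpecialLinearGroup x y z),
    traceTower.card_of_commutatorDet_ne_zero hdet]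

theorem tower_card (p : ℕ) (hp : p.Prime) (hp5 : 5 < p) (x y z : ZMod p)
    (hns : x ^ 2 + y ^ 2 + z ^ 2 - x * y * z ≠ 4) :
    Nat.card {AB : Matrix.SpecialLinearGroup (Fin 2) (ZMod p) ×
        Matrix.SpecialLinearGroup (Fin 2) (ZMod p) //
      Matrix.trace (AB.1 : Matrix (Fin 2) (Fin 2) (ZMod p)) = x ∧
      Matrix.trace (AB.2 : Matrix (Fin 2) (Fin 2) (ZMod p)) = y ∧
      Matrix.trace ((AB.1 * AB.2 : Matrix.SpecialLinearGroup (Fin 2) (ZMod p)) :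
        Matrix (Fin 2) (Fin 2) (ZMod p)) = z} = p * (p ^ 2 - 1) := by
  have : Fact p.Prime := ⟨hp⟩
  simpa only [Nat.card_zmod] using tower_card_general x y z hns
end

section
/- Let p be a prime with p > 5 and let A, B ∈ SL(2, 𝔽_p) be such that the subgroup of PSL₂(𝔽_p) generated by the images of A and B is isomorphic to the alternating group A₅. Then k = tr(A B A⁻¹ B⁻¹) satisfies k = 1 or k² − k − 1 = 0, and each trace t ∈ {tr(A), tr(B), tr(AB)} satisfies t = 0, or t² = 1, or t⁴ − 3t² + 1 = 0. -/
/-!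
An element `U` of `SL(2, R)` satisfies `U ^ (n + 1) = S_n(tr U) • U - S_{n-1}(tr U) • 1`, with `S_n`
the rescaled Chebyshev polynomials, so over a domain a noncentral `U` with `U ^ (n + 1)` central has
`S_n(tr U) = 0`. As every element of `A₅` has order `1`, `2`, `3` or `5`, this restricts the traces
of `A`, `B` and `A * B`.

For the commutator, one of `A`, `B`, `A * B` has image of order `5`: otherwise the three orders are
`2` or `3`, so the images generate a quotient of a dihedral group, of `A₄` or of the Euclidean
triangle group `(3, 3, 3)`, and none of these maps onto a nonabelian simple group. The trace of
`⁅A, B⁆` does not change when the pair is swapped or `A` is multiplied by a power of `B`. Hence we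
may assume that `B` has order `5`, and then, since each coset of the subgroup generated by a 5-cycle
outside its normalizer contains an involution, that `A` has order `2`. Fricke's identity then reads
`tr ⁅A, B⁆ = (tr B) ^ 2 + (tr (A * B)) ^ 2 - 2`, where `A * B` has order `3` or `5`; in the second
case `⁅A, B⁆` has order `3`, which leaves only the value `1`.
-/

open Polynomial
open scoped commutatorElement MatrixGroups

section GeneratingPair

variable {G : Type*} [Group G] {a b : G}

lemma commutatorElement_mul_pow_left (a b : G) (n : ℕ) : ⁅a * b ^ n, b⁆ = ⁅a, b⁆ := by
  simp only [commutatorElement_def]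
  group

lemma closure_mul_pow_pair (a b : G) (n : ℕ) :
    Subgroup.closure {a * b ^ n, b} = Subgroup.closure {a, b} := by
  have ha : a ∈ Subgroup.closure {a, b} := Subgroup.subset_closure (by simp)
  have hb : b ∈ Subgroup.closure {a, b} := Subgroup.subset_closure (by simp)
  have hab : a * b ^ n ∈ Subgroup.closure {a * b ^ n, b} := Subgroup.subset_closure (by simp)
  have hb' : b ∈ Subgroup.closure {a * b ^ n, b} := Subgroup.subset_closure (by simp)
  apply le_antisymm <;> rw [Subgroup.closure_le, Set.pair_subset_iff]
  · exact ⟨mul_mem ha (pow_mem hb n), hb⟩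
  · exact ⟨by simpa using mul_mem hab (inv_mem (pow_mem hb' n)), hb'⟩

lemma closure_mul_pair (a b : G) : Subgroup.closure {a * b, b} = Subgroup.closure {a, b} := by
  simpa using closure_mul_pow_pair a b 1

lemma closure_pair_map_eq_top {H : Type*} [Group H] {f : G →* H} (hf : Function.Surjective f)
    (h : Subgroup.closure {a, b} = ⊤) : Subgroup.closure {f a, f b} = ⊤ := by
  rw [← Set.image_pair, ← MonoidHom.map_closure, h, Subgroup.map_top_of_surjective f hf]

lemma closure_subtype_pair_eq_top (a b : G) :
    Subgroup.closure ({⟨a, Subgroup.subset_closure (by simp)⟩,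
      ⟨b, Subgroup.subset_closure (by simp)⟩} : Set (Subgroup.closure {a, b})) = ⊤ := by
  apply Subgroup.map_injective (Subgroup.subtype_injective _)
  rw [MonoidHom.map_closure, Set.image_pair, ← MonoidHom.range_eq_map, Subgroup.range_subtype]
  rfl

lemma isMulCommutative_of_closure_eq_top {S : Set G} (hS : Subgroup.closure S = ⊤)
    (hcomm : ∀ x ∈ S, ∀ y ∈ S, x * y = y * x) : IsMulCommutative G := by
  have hcl := Subgroup.isMulCommutative_closure hcomm
  rw [hS] at hcl
  exact ⟨⟨fun x y => congrArg Subtype.val (hcl.is_comm.comm ⟨x, trivial⟩ ⟨y, trivial⟩)⟩⟩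

lemma not_commute_of_closure_pair_eq_top (hG : ¬ IsMulCommutative G)
    (hab : Subgroup.closure {a, b} = ⊤) : ¬ Commute a b := by
  intro hcomm
  refine hG (isMulCommutative_of_closure_eq_top hab ?_)
  rintro x (rfl | rfl) y (rfl | rfl)
  exacts [rfl, hcomm, hcomm.symm, rfl]

lemma notMem_of_commutatorElement_notMem {N : Subgroup G} [N.Normal] (h : ⁅a, b⁆ ∉ N) :
    a ∉ N ∧ b ∉ N ∧ a * b ∉ N := by
  have hleft {x : G} (y : G) (hx : x ∈ N) : ⁅x, y⁆ ∈ N :=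
    Subgroup.commutator_le_left N ⊤ (Subgroup.commutator_mem_commutator hx (Subgroup.mem_top y))
  refine ⟨fun ha => h (hleft b ha), fun hb => h ?_, fun hab => h ?_⟩
  · rw [← commutatorElement_inv]
    exact inv_mem (hleft a hb)
  · simpa only [← commutatorElement_mul_pow_left a b 1, pow_one] using hleft b hab

variable [IsSimpleGroup G]

lemma eq_one_of_conj_mem (hG : ¬ IsMulCommutative G) {S T : Set G} [Finite T]
    (hS : Subgroup.closure S = ⊤) (hcomm : ∀ x ∈ T, ∀ y ∈ T, x * y = y * x)
    (hconj : ∀ s ∈ S, ∀ t ∈ T, s * t * s⁻¹ ∈ T) {t : G} (ht : t ∈ T) : t = 1 := by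
  have hnormalizer : Subgroup.normalizer (Subgroup.closure T : Set G) = ⊤ := by
    rw [eq_top_iff, ← hS, Subgroup.closure_le]
    exact fun s hs =>
      Subgroup.normalizer_le_normalizer_closure T (Subgroup.mem_normalizer_fintype (hconj s hs))
  rcases (Subgroup.normalizer_eq_top_iff.1 hnormalizer).eq_bot_or_eq_top with hbot | htop
  · exact Subgroup.closure_eq_bot_iff.1 hbot ht
  · exact absurd (isMulCommutative_of_closure_eq_top htop hcomm) hG

lemma sq_ne_one_of_sq_eq_one (hG : ¬ IsMulCommutative G) (hab : Subgroup.closure {a, b} = ⊤)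
    (ha : a ^ 2 = 1) : b ^ 2 ≠ 1 := by
  intro hb
  rw [sq] at ha hb
  have ha_inv : a⁻¹ = a := inv_eq_of_mul_eq_one_left ha
  have hb_inv : b⁻¹ = b := inv_eq_of_mul_eq_one_left hb
  -- `a` and `b` swap the rotation `a * b` of a dihedral group with its inverse.
  have hmul : a * b = 1 := by
    refine eq_one_of_conj_mem hG (T := {a * b, b * a}) hab ?_ ?_ (by simp) <;>
    simp only [Set.mem_insert_iff, Set.mem_singleton_iff, forall_eq_or_imp, forall_eq,
      ha_inv, hb_inv] <;> grind only
  exact not_commute_of_closure_pair_eq_top hG hab (by rw [commute_iff_eq]; grind)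

lemma mul_pow_three_ne_one_of_sq_eq_one (hG : ¬ IsMulCommutative G)
    (hab : Subgroup.closure {a, b} = ⊤) (ha : a ^ 2 = 1) (hb : b ^ 3 = 1) : (a * b) ^ 3 ≠ 1 := by
  intro hmul
  simp only [pow_succ, pow_zero, one_mul] at ha hb hmul
  have ha_inv : a⁻¹ = a := inv_eq_of_mul_eq_one_left ha
  have hb_inv : b⁻¹ = b * b := inv_eq_of_mul_eq_one_left hb
  -- These relations present `A₄`, and `T` is the set of nontrivial elements of its Klein subgroup.
  have ha_one : a = 1 := by
    refine eq_one_of_conj_mem hG (T := {a, b * a * b⁻¹, b⁻¹ * a * b}) hab ?_ ?_ (by simp) <;>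
    simp only [Set.mem_insert_iff, Set.mem_singleton_iff, forall_eq_or_imp, forall_eq,
      ha_inv, hb_inv] <;> grind only
  exact not_commute_of_closure_pair_eq_top hG hab (ha_one ▸ Commute.one_left b)

lemma mul_pow_three_ne_one_of_pow_three_eq_one (hG : ¬ IsMulCommutative G)
    (hab : Subgroup.closure {a, b} = ⊤) (ha : a ^ 3 = 1) (hb : b ^ 3 = 1) : (a * b) ^ 3 ≠ 1 := by
  intro hmul
  simp only [pow_succ, pow_zero, one_mul] at ha hb hmul
  have ha_inv : a⁻¹ = a * a := inv_eq_of_mul_eq_one_left ha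
  have hb_inv : b⁻¹ = b * b := inv_eq_of_mul_eq_one_left hb
  -- These relations present the Euclidean triangle group `(3, 3, 3)`, and `T` consists of three
  -- generating translations with product `1`.
  have hdiv : a * b⁻¹ = 1 := by
    refine eq_one_of_conj_mem hG (T := {a * b⁻¹, b * a * b, b⁻¹ * a}) hab ?_ ?_ (by simp) <;>
    simp only [Set.mem_insert_iff, Set.mem_singleton_iff, forall_eq_or_imp, forall_eq,
      ha_inv, hb_inv] <;> grind only
  exact not_commute_of_closure_pair_eq_top hG hab (mul_inv_eq_one.1 hdiv ▸ Commute.refl a)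

lemma not_sq_or_pow_three_eq_one (hG : ¬ IsMulCommutative G)
    (hab : Subgroup.closure {a, b} = ⊤) (ha : a ^ 2 = 1 ∨ a ^ 3 = 1) (hb : b ^ 2 = 1 ∨ b ^ 3 = 1) :
    ¬ ((a * b) ^ 2 = 1 ∨ (a * b) ^ 3 = 1) := by
  have hba : Subgroup.closure {b, a} = ⊤ := by rwa [Set.pair_comm]
  have hab_b : Subgroup.closure {a * b, b} = ⊤ := by rwa [closure_mul_pair]
  have hba_a : Subgroup.closure {b * a, a} = ⊤ := by rwa [closure_mul_pair]
  have hswap (n : ℕ) : (b * a) ^ n = 1 ↔ (a * b) ^ n = 1 := by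
    have hconj : b * a = b * (a * b) * b⁻¹ := by group
    rw [hconj, conj_pow, conj_eq_one_iff]
  rintro (hmul | hmul) <;> rcases ha with ha | ha <;> rcases hb with hb | hb
  · exact sq_ne_one_of_sq_eq_one hG hab ha hb
  · exact sq_ne_one_of_sq_eq_one hG hba_a ((hswap 2).2 hmul) ha
  · exact sq_ne_one_of_sq_eq_one hG hab_b hmul hb
  · refine mul_pow_three_ne_one_of_sq_eq_one hG hab_b hmul hb ?_
    have hab_inv : a * b = b⁻¹ * a⁻¹ := by rw [← mul_inv_rev, eq_inv_iff_mul_eq_one, ← sq, hmul]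
    have hconj : a * b * b = b⁻¹ * a⁻¹ * b := by rw [hab_inv]
    rw [hconj]
    simpa [ha] using conj_pow (a := b⁻¹) (b := a⁻¹) (i := 3)
  · exact sq_ne_one_of_sq_eq_one hG hab ha hb
  · exact mul_pow_three_ne_one_of_sq_eq_one hG hab ha hb hmul
  · exact mul_pow_three_ne_one_of_sq_eq_one hG hba hb ha ((hswap 3).2 hmul)
  · exact mul_pow_three_ne_one_of_pow_three_eq_one hG hab ha hb hmul

end GeneratingPair

section RestrictedKernel

variable {G H : Type*} [Group G] [Group H] {N Γ : Subgroup G} {φ : Γ →* H} {a b : Γ}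

lemma coe_pow_mem_of_ker_eq (hφ : φ.ker = N.subgroupOf Γ) {n : ℕ} (ha : φ a ^ n = 1) :
    a.1 ^ n ∈ N := by
  rwa [← map_pow, ← MonoidHom.mem_ker, hφ, Subgroup.mem_subgroupOf] at ha

lemma coe_commutatorElement_notMem_of_ker_eq (hφ : φ.ker = N.subgroupOf Γ)
    (hab : ¬ Commute (φ a) (φ b)) : ⁅a.1, b.1⁆ ∉ N := by
  rw [← commutatorElement_eq_one_iff_commute, ← map_commutatorElement, ← MonoidHom.mem_ker, hφ,
    Subgroup.mem_subgroupOf] at hab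
  exact hab

end RestrictedKernel

section Trace

variable {R : Type*} [CommRing R]

lemma coe_sq_eq_trace_smul_sub_one (U : SL(2, R)) :
    (U : Matrix (Fin 2) (Fin 2) R) ^ 2 = (U : Matrix (Fin 2) (Fin 2) R).trace • U.1 - 1 := by
  nontriviality R
  have h := Matrix.aeval_self_charpoly (U : Matrix (Fin 2) (Fin 2) R)
  simp only [Matrix.charpoly_fin_two, Matrix.SpecialLinearGroup.det_coe, map_add, map_sub, map_mul,
    map_pow, aeval_X, aeval_C, map_one, Algebra.algebraMap_eq_smul_one, smul_mul_assoc,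
    one_mul] at h
  rw [← sub_eq_zero, ← h]
  abel

lemma coe_pow_succ_eq_chebyshev (U : SL(2, R)) (n : ℕ) :
    (U : Matrix (Fin 2) (Fin 2) R) ^ (n + 1) = (Chebyshev.S R n).eval U.1.trace • U.1 -
      (Chebyshev.S R (n - 1)).eval U.1.trace • 1 := by
  induction n with
  | zero => simp
  | succ n ih =>
    rw [pow_succ, ih, sub_mul, smul_mul_assoc, ← sq, coe_sq_eq_trace_smul_sub_one]
    push_cast
    rw [Chebyshev.S_add_one, add_sub_cancel_right, smul_mul_assoc, one_mul]
    simp only [eval_sub, eval_mul, eval_X]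
    module

lemma mem_center_iff_entries {U : SL(2, R)} :
    U ∈ Subgroup.center SL(2, R) ↔ U.1 0 1 = 0 ∧ U.1 1 0 = 0 ∧ U.1 0 0 = U.1 1 1 := by
  rw [Matrix.SpecialLinearGroup.mem_center_iff]
  constructor
  · rintro ⟨r, -, hr⟩
    simp [← hr]
  · rintro ⟨h01, h10, hdiag⟩
    have hdet := U.det_coe
    rw [Matrix.det_fin_two, h01, ← hdiag, zero_mul, sub_zero] at hdet
    refine ⟨U.1 0 0, by simpa [sq] using hdet, ?_⟩
    ext i j
    fin_cases i <;> fin_cases j <;> simp [h01, h10, hdiag]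

lemma trace_inv (U : SL(2, R)) : (U⁻¹).1.trace = U.1.trace := by
  simp [Matrix.adjugate_fin_two, Matrix.trace_fin_two, add_comm]

lemma trace_commutatorElement (U V : SL(2, R)) :
    ⁅U, V⁆.1.trace = U.1.trace ^ 2 + V.1.trace ^ 2 + (U * V).1.trace ^ 2
      - U.1.trace * V.1.trace * (U * V).1.trace - 2 := by
  have hU := U.det_coe
  have hV := V.det_coe
  rw [Matrix.det_fin_two] at hU hV
  simp only [commutatorElement_def, Matrix.SpecialLinearGroup.coe_mul,
    Matrix.SpecialLinearGroup.coe_inv, Matrix.adjugate_fin_two, Matrix.trace_fin_two,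
    Matrix.mul_apply, Fin.sum_univ_two, Matrix.of_apply, Matrix.cons_val', Matrix.cons_val_zero,
    Matrix.cons_val_one, Matrix.cons_val_fin_one]
  grind

lemma trace_commutatorElement_comm (U V : SL(2, R)) : ⁅U, V⁆.1.trace = ⁅V, U⁆.1.trace := by
  rw [← trace_inv, commutatorElement_inv]

variable [IsDomain R] {U V : SL(2, R)}

lemma eval_chebyshev_trace_eq_zero (hU : U ∉ Subgroup.center SL(2, R)) {n : ℕ}
    (hpow : U ^ (n + 1) ∈ Subgroup.center SL(2, R)) :
    (Chebyshev.S R n).eval U.1.trace = 0 := by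
  contrapose! hU with hs
  rw [mem_center_iff_entries] at hpow ⊢
  simpa [coe_pow_succ_eq_chebyshev, hs] using hpow

lemma trace_eq_zero_of_sq_mem_center (hU : U ∉ Subgroup.center SL(2, R))
    (h : U ^ 2 ∈ Subgroup.center SL(2, R)) : U.1.trace = 0 := by
  simpa using eval_chebyshev_trace_eq_zero hU (n := 1) h

lemma trace_sq_eq_one_of_pow_three_mem_center (hU : U ∉ Subgroup.center SL(2, R))
    (h : U ^ 3 ∈ Subgroup.center SL(2, R)) :
    U.1.trace ^ 2 = 1 := by
  simpa [Chebyshev.S_two, sub_eq_zero] using eval_chebyshev_trace_eq_zero hU (n := 2) h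

lemma trace_quartic_of_pow_five_mem_center (hU : U ∉ Subgroup.center SL(2, R))
    (h : U ^ 5 ∈ Subgroup.center SL(2, R)) :
    U.1.trace ^ 4 - 3 * U.1.trace ^ 2 + 1 = 0 := by
  have hS := eval_chebyshev_trace_eq_zero hU (n := 4) h
  have hS_three : Chebyshev.S R 3 = X * Chebyshev.S R 2 - Chebyshev.S R 1 :=
    Chebyshev.S_add_two R 1
  have hS_four : Chebyshev.S R 4 = X * Chebyshev.S R 3 - Chebyshev.S R 2 :=
    Chebyshev.S_add_two R 2
  simp only [Nat.cast_ofNat, hS_four, hS_three, Chebyshev.S_two, Chebyshev.S_one, eval_sub,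
    eval_mul, eval_pow, eval_X, eval_one] at hS
  linear_combination hS

lemma sq_add_sq_sub_two_eq_one {y z : R} (hy : y ^ 4 - 3 * y ^ 2 + 1 = 0)
    (hz : z ^ 4 - 3 * z ^ 2 + 1 = 0) (h : (y ^ 2 + z ^ 2 - 2) ^ 2 = 1) :
    y ^ 2 + z ^ 2 - 2 = 1 := by
  have hprod : (y ^ 2 - z ^ 2) * (y ^ 2 + z ^ 2 - 3) = 0 := by linear_combination hy - hz
  rcases mul_eq_zero.1 hprod with heq | hsum
  -- Here `4 * y ^ 2 = 1`, so `5 = 0` in `R`.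
  · have hfour : 4 * y ^ 2 = 1 := by grind
    have hsq : (2 * y ^ 2 - 3) ^ 2 = 0 := by grind
    linear_combination ((pow_eq_zero_iff two_ne_zero).1 hsq) - heq
  · linear_combination hsum

lemma trace_commutatorElement_of_two_five_three (hUV : ⁅U, V⁆ ∉ Subgroup.center SL(2, R))
    (hU : U ^ 2 ∈ Subgroup.center SL(2, R)) (hV : V ^ 5 ∈ Subgroup.center SL(2, R))
    (hmul : (U * V) ^ 3 ∈ Subgroup.center SL(2, R)) :
    ⁅U, V⁆.1.trace ^ 2 - ⁅U, V⁆.1.trace - 1 = 0 := by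
  obtain ⟨hU', hV', hmul'⟩ := notMem_of_commutatorElement_notMem hUV
  rw [trace_commutatorElement, trace_eq_zero_of_sq_mem_center hU' hU,
    trace_sq_eq_one_of_pow_three_mem_center hmul' hmul]
  linear_combination trace_quartic_of_pow_five_mem_center hV' hV

lemma trace_commutatorElement_of_two_five_five (hUV : ⁅U, V⁆ ∉ Subgroup.center SL(2, R))
    (hU : U ^ 2 ∈ Subgroup.center SL(2, R)) (hV : V ^ 5 ∈ Subgroup.center SL(2, R))
    (hmul : (U * V) ^ 5 ∈ Subgroup.center SL(2, R))
    (hcomm : ⁅U, V⁆ ^ 3 ∈ Subgroup.center SL(2, R)) : ⁅U, V⁆.1.trace = 1 := by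
  obtain ⟨hU', hV', hmul'⟩ := notMem_of_commutatorElement_notMem hUV
  have htrace : ⁅U, V⁆.1.trace = V.1.trace ^ 2 + (U * V).1.trace ^ 2 - 2 := by
    rw [trace_commutatorElement, trace_eq_zero_of_sq_mem_center hU' hU]
    ring
  have hsq := trace_sq_eq_one_of_pow_three_mem_center hUV hcomm
  rw [htrace] at hsq ⊢
  exact sq_add_sq_sub_two_eq_one (trace_quartic_of_pow_five_mem_center hV' hV)
    (trace_quartic_of_pow_five_mem_center hmul' hmul) hsq

end Trace

section AlternatingGroupFive

/-- The standard 5-cycle `(0 1 2 3 4)`, as an element of `A₅`. -/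
def fiveCycle : alternatingGroup (Fin 5) :=
  ⟨finRotate 5, Equiv.Perm.finRotate_bit1_mem_alternatingGroup (n := 2)⟩

lemma not_isMulCommutative_alternatingGroup_five :
    ¬ IsMulCommutative (alternatingGroup (Fin 5)) := by
  simp [alternatingGroup.isMulCommutative_iff_card_le_three]

lemma sq_or_pow_three_or_pow_five_eq_one (g : alternatingGroup (Fin 5)) :
    g ^ 2 = 1 ∨ g ^ 3 = 1 ∨ g ^ 5 = 1 := by
  revert g
  decide +kernel

lemma conj_fiveCycle_or_exists_mul_pow_sq_eq_one (u : alternatingGroup (Fin 5)) :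
    (∃ i : Fin 5, u * fiveCycle * u⁻¹ = fiveCycle ^ (i : ℕ)) ∨
      ∃ i : Fin 5, (u * fiveCycle ^ (i : ℕ)) ^ 2 = 1 := by
  revert u
  decide +kernel

lemma conj_fiveCycle_or_mul_fiveCycle_pow_eq_one (u : alternatingGroup (Fin 5)) (hu : u ^ 2 = 1) :
    (∃ i : Fin 5, u * fiveCycle * u⁻¹ = fiveCycle ^ (i : ℕ)) ∨
      (u * fiveCycle) ^ 3 = 1 ∨ (u * fiveCycle) ^ 5 = 1 ∧ ⁅u, fiveCycle⁆ ^ 3 = 1 := by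
  revert u
  decide +kernel

lemma conj_fiveCycle_ne_pow {u : alternatingGroup (Fin 5)}
    (hu : Subgroup.closure {u, fiveCycle} = ⊤) (n : ℕ) :
    u * fiveCycle * u⁻¹ ≠ fiveCycle ^ n := by
  intro hconj
  suffices fiveCycle = 1 from absurd this (by decide)
  refine eq_one_of_conj_mem not_isMulCommutative_alternatingGroup_five
    (T := Subgroup.zpowers fiveCycle) hu ?_ ?_ (Subgroup.mem_zpowers _)
  · rintro _ ⟨i, rfl⟩ _ ⟨j, rfl⟩
    exact zpow_mul_comm fiveCycle i j
  · rintro s (rfl | rfl) _ ⟨i, rfl⟩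
    · rw [← conj_zpow, hconj]
      exact zpow_mem (pow_mem (Subgroup.mem_zpowers _) n) i
    · exact ⟨i, by simp [(Commute.refl fiveCycle).zpow_right i |>.eq]⟩

lemma exists_mulEquiv_eq_fiveCycle {v : alternatingGroup (Fin 5)} (hv : v ^ 5 = 1) (hv1 : v ≠ 1) :
    ∃ e : alternatingGroup (Fin 5) ≃* alternatingGroup (Fin 5), e v = fiveCycle := by
  have : Fact (Nat.Prime 5) := ⟨Nat.prime_five⟩
  have horder : orderOf (v : Equiv.Perm (Fin 5)) = 5 := by
    rw [Subgroup.orderOf_coe, orderOf_eq_prime hv hv1]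
  have hcycle : (v : Equiv.Perm (Fin 5)).IsCycle :=
    Equiv.Perm.isCycle_of_prime_order'' (by norm_num) (by simp [horder])
  have hconj : IsConj (v : Equiv.Perm (Fin 5)) (finRotate 5) := by
    rw [Equiv.Perm.isConj_iff_cycleType_eq, cycleType_finRotate, hcycle.cycleType,
      ← hcycle.orderOf, horder]
  obtain ⟨c, hc⟩ := isConj_iff.1 hconj
  exact ⟨MulAut.conjNormal c, Subtype.ext (by rw [MulAut.conjNormal_apply, hc]; rfl)⟩

lemma exists_mul_fiveCycle_pow_sq_eq_one {u : alternatingGroup (Fin 5)}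
    (hu : Subgroup.closure {u, fiveCycle} = ⊤) :
    ∃ n : ℕ, (u * fiveCycle ^ n) ^ 2 = 1 ∧ ((u * fiveCycle ^ n * fiveCycle) ^ 3 = 1 ∨
      (u * fiveCycle ^ n * fiveCycle) ^ 5 = 1 ∧ ⁅u * fiveCycle ^ n, fiveCycle⁆ ^ 3 = 1) := by
  obtain ⟨i, hi⟩ | ⟨n, hn⟩ := conj_fiveCycle_or_exists_mul_pow_sq_eq_one u
  · exact absurd hi (conj_fiveCycle_ne_pow hu i)
  refine ⟨n, hn, (conj_fiveCycle_or_mul_fiveCycle_pow_eq_one _ hn).resolve_left ?_⟩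
  rintro ⟨i, hi⟩
  exact conj_fiveCycle_ne_pow (by rwa [closure_mul_pow_pair]) i hi

lemma exists_mul_pow_sq_eq_one {u v : alternatingGroup (Fin 5)}
    (huv : Subgroup.closure {u, v} = ⊤) (hv : v ^ 5 = 1) :
    ∃ n : ℕ, (u * v ^ n) ^ 2 = 1 ∧ ((u * v ^ n * v) ^ 3 = 1 ∨
      (u * v ^ n * v) ^ 5 = 1 ∧ ⁅u * v ^ n, v⁆ ^ 3 = 1) := by
  have hv1 : v ≠ 1 := by
    rintro rfl
    exact not_commute_of_closure_pair_eq_top not_isMulCommutative_alternatingGroup_five huv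
      (Commute.one_right u)
  obtain ⟨e, he⟩ := exists_mulEquiv_eq_fiveCycle hv hv1
  have hgen := closure_pair_map_eq_top (f := e.toMonoidHom) e.surjective huv
  simp only [MulEquiv.coe_toMonoidHom, he] at hgen
  simpa only [← he, ← map_pow, ← map_mul, ← map_commutatorElement, EmbeddingLike.map_eq_one_iff]
    using exists_mul_fiveCycle_pow_sq_eq_one hgen

lemma pow_five_eq_one_of_closure_eq_top {a b : alternatingGroup (Fin 5)}
    (hab : Subgroup.closure {a, b} = ⊤) : a ^ 5 = 1 ∨ b ^ 5 = 1 ∨ (a * b) ^ 5 = 1 := by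
  have := not_sq_or_pow_three_eq_one not_isMulCommutative_alternatingGroup_five hab
  grind [sq_or_pow_three_or_pow_five_eq_one a, sq_or_pow_three_or_pow_five_eq_one b,
    sq_or_pow_three_or_pow_five_eq_one (a * b)]

end AlternatingGroupFive

section ProjectiveIcosahedral

variable {R : Type*} [CommRing R] [IsDomain R] {Γ : Subgroup SL(2, R)}
  {φ : Γ →* alternatingGroup (Fin 5)} {a b g : Γ}

lemma trace_eq_zero_or_sq_eq_one_or_quartic
    (hφ : φ.ker = (Subgroup.center SL(2, R)).subgroupOf Γ)
    (hg : g.1 ∉ Subgroup.center SL(2, R)) :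
    g.1.1.trace = 0 ∨ g.1.1.trace ^ 2 = 1 ∨ g.1.1.trace ^ 4 - 3 * g.1.1.trace ^ 2 + 1 = 0 := by
  rcases sq_or_pow_three_or_pow_five_eq_one (φ g) with h | h | h
  · exact .inl (trace_eq_zero_of_sq_mem_center hg (coe_pow_mem_of_ker_eq hφ h))
  · exact .inr (.inl (trace_sq_eq_one_of_pow_three_mem_center hg (coe_pow_mem_of_ker_eq hφ h)))
  · exact .inr (.inr (trace_quartic_of_pow_five_mem_center hg (coe_pow_mem_of_ker_eq hφ h)))

lemma trace_commutatorElement_of_pow_five_eq_one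
    (hφ : φ.ker = (Subgroup.center SL(2, R)).subgroupOf Γ)
    (hab : Subgroup.closure {φ a, φ b} = ⊤) (hb : φ b ^ 5 = 1) :
    ⁅a.1, b.1⁆.1.trace = 1 ∨ ⁅a.1, b.1⁆.1.trace ^ 2 - ⁅a.1, b.1⁆.1.trace - 1 = 0 := by
  obtain ⟨n, hsq, hmul⟩ := exists_mul_pow_sq_eq_one hab hb
  simp only [← map_pow φ b, ← map_mul, ← map_commutatorElement] at hsq hmul
  have hcenter := coe_commutatorElement_notMem_of_ker_eq hφ
    (not_commute_of_closure_pair_eq_top not_isMulCommutative_alternatingGroup_five hab)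
  rw [← commutatorElement_mul_pow_left a.1 b.1 n] at hcenter ⊢
  have hsq_center := coe_pow_mem_of_ker_eq hφ hsq
  have hb_center := coe_pow_mem_of_ker_eq hφ hb
  rcases hmul with hmul | ⟨hmul, hcomm⟩
  · exact .inr (trace_commutatorElement_of_two_five_three hcenter hsq_center hb_center
      (coe_pow_mem_of_ker_eq hφ hmul))
  · exact .inl (trace_commutatorElement_of_two_five_five hcenter hsq_center hb_center
      (coe_pow_mem_of_ker_eq hφ hmul) (coe_pow_mem_of_ker_eq hφ hcomm))

lemma trace_commutatorElement_of_closure_eq_top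
    (hφ : φ.ker = (Subgroup.center SL(2, R)).subgroupOf Γ)
    (hab : Subgroup.closure {φ a, φ b} = ⊤) :
    ⁅a.1, b.1⁆.1.trace = 1 ∨ ⁅a.1, b.1⁆.1.trace ^ 2 - ⁅a.1, b.1⁆.1.trace - 1 = 0 := by
  rcases pow_five_eq_one_of_closure_eq_top hab with ha | hb | hmul
  · rw [trace_commutatorElement_comm]
    exact trace_commutatorElement_of_pow_five_eq_one hφ (by rwa [Set.pair_comm]) ha
  · exact trace_commutatorElement_of_pow_five_eq_one hφ hab hb
  · have hcomm : ⁅a.1, b.1⁆ = ⁅(a * b).1, b.1⁆ := by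
      simpa using (commutatorElement_mul_pow_left a.1 b.1 1).symm
    rw [hcomm, trace_commutatorElement_comm]
    refine trace_commutatorElement_of_pow_five_eq_one hφ ?_ (by rwa [map_mul])
    rwa [Set.pair_comm, map_mul, closure_mul_pair]

end ProjectiveIcosahedral

theorem icosahedral_pair_traces_general {R : Type*} [CommRing R] [IsDomain R] (A B : SL(2, R))
    (hiso : Nonempty (Subgroup.closure {(A : SL(2, R) ⧸ Subgroup.center SL(2, R)), ↑B} ≃*
      alternatingGroup (Fin 5))) :
    ((A * B * A⁻¹ * B⁻¹).1.trace = 1 ∨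
      (A * B * A⁻¹ * B⁻¹).1.trace ^ 2 - (A * B * A⁻¹ * B⁻¹).1.trace - 1 = 0) ∧
    ∀ t : R, (t = A.1.trace ∨ t = B.1.trace ∨ t = (A * B).1.trace) →
      t = 0 ∨ t ^ 2 = 1 ∨ t ^ 4 - 3 * t ^ 2 + 1 = 0 := by
  obtain ⟨e⟩ := hiso
  let π := QuotientGroup.mk' (Subgroup.center SL(2, R))
  let φ := e.toMonoidHom.comp (π.subgroupComap (Subgroup.closure {π A, π B}))
  let a : (Subgroup.closure {π A, π B}).comap π := ⟨A, Subgroup.subset_closure (by simp)⟩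
  let b : (Subgroup.closure {π A, π B}).comap π := ⟨B, Subgroup.subset_closure (by simp)⟩
  have hφ : φ.ker = (Subgroup.center SL(2, R)).subgroupOf _ := by
    ext g
    exact (map_eq_one_iff e e.injective).trans
      (Subtype.ext_iff.trans (QuotientGroup.eq_one_iff g.1))
  have hgen : Subgroup.closure {φ a, φ b} = ⊤ :=
    closure_pair_map_eq_top (f := e.toMonoidHom) e.surjective (closure_subtype_pair_eq_top _ _)
  obtain ⟨hA, hB, hAB⟩ := notMem_of_commutatorElement_notMem
    (coe_commutatorElement_notMem_of_ker_eq hφ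
      (not_commute_of_closure_pair_eq_top not_isMulCommutative_alternatingGroup_five hgen))
  refine ⟨trace_commutatorElement_of_closure_eq_top (a := a) (b := b) hφ hgen, ?_⟩
  rintro t (rfl | rfl | rfl)
  · exact trace_eq_zero_or_sq_eq_one_or_quartic (g := a) hφ hA
  · exact trace_eq_zero_or_sq_eq_one_or_quartic (g := b) hφ hB
  · exact trace_eq_zero_or_sq_eq_one_or_quartic (g := a * b) hφ hAB

theorem icosahedral_pair_traces (p : ℕ) (hp : p.Prime) (hp5 : 5 < p)
    (A B : Matrix.SpecialLinearGroup (Fin 2) (ZMod p))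
    (hiso : Nonempty
      ((Subgroup.closure {(QuotientGroup.mk A :
          Matrix.SpecialLinearGroup (Fin 2) (ZMod p) ⧸
            Subgroup.center (Matrix.SpecialLinearGroup (Fin 2) (ZMod p))),
        QuotientGroup.mk B}) ≃* alternatingGroup (Fin 5))) :
    (Matrix.trace ((A * B * A⁻¹ * B⁻¹ : Matrix.SpecialLinearGroup (Fin 2) (ZMod p)) :
        Matrix (Fin 2) (Fin 2) (ZMod p)) = 1 ∨
      Matrix.trace ((A * B * A⁻¹ * B⁻¹ : Matrix.SpecialLinearGroup (Fin 2) (ZMod p)) :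
          Matrix (Fin 2) (Fin 2) (ZMod p)) ^ 2 -
        Matrix.trace ((A * B * A⁻¹ * B⁻¹ : Matrix.SpecialLinearGroup (Fin 2) (ZMod p)) :
          Matrix (Fin 2) (Fin 2) (ZMod p)) - 1 = 0) ∧
    (∀ t : ZMod p,
      (t = Matrix.trace (A : Matrix (Fin 2) (Fin 2) (ZMod p)) ∨
        t = Matrix.trace (B : Matrix (Fin 2) (Fin 2) (ZMod p)) ∨
        t = Matrix.trace ((A * B : Matrix.SpecialLinearGroup (Fin 2) (ZMod p)) :
          Matrix (Fin 2) (Fin 2) (ZMod p))) →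
      t = 0 ∨ t ^ 2 = 1 ∨ t ^ 4 - 3 * t ^ 2 + 1 = 0) := by
  have : Fact p.Prime := ⟨hp⟩
  exact icosahedral_pair_traces_general A B hiso
end

section
/- Let p be an odd prime and let a, b ∈ 𝔽_p be nonzero with a ≠ b. Let N be the number of triples (x, y, z) ∈ 𝔽_p³ satisfying x² + a = y² and x² + b = z². Then |N − (p − 3)| ≤ 2√p (as real numbers). -/
/-
Counting square roots with the quadratic character `χ` of a field with `q` elements gives
`N = ∑ u, (1 + χ u) (1 + χ (u + a)) (1 + χ (u + b))`, and all but one of the resulting sums are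
elementary: `N = q - 3 + t` with `t = ∑ u, χ (f u)`, `f = X (X + a) (X + b)`. It remains to show
`t ^ 2 ≤ 4 q`, which is Hasse's bound for `y ^ 2 = f(x)`. We follow Manin's elementary proof. Over
`F(X)` the twist `f * y ^ 2 = f(x)` contains the points `T = (X, 1)` and
`S = (X ^ q, f ^ ((q - 1) / 2))`. Let `d n` be the degree of the numerator of the `x`-coordinate of
`S + n T` in lowest terms. The formulas for the sum and the product of `x(P + Q)` and `x(P - Q)`
yield `d (n + 1) + d (n - 1) = 2 * d n + 2`, and cancelling common factors in `x(S ± T)` yields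
`d 1 = q + 1 - t`. Hence `d n = n ^ 2 - t n + q`, and as this is never negative `t ^ 2 ≤ 4 q`.
-/

section PrimitiveRepresentatives

variable {ι R K : Type*} [CommRing R] [Field K] [Algebra R K]

/-- `w` is a vector of homogeneous coordinates over `R`, with entries generating the unit ideal, of
the point of projective space over `K` with homogeneous coordinates `v`. -/
structure IsPrimitiveRep (v : ι → K) (w : ι → R) : Prop where
  span_range : Ideal.span (Set.range w) = ⊤
  exists_eq_smul : ∃ c : K, c ≠ 0 ∧ v = c • (algebraMap R K ∘ w)

lemma dvd_of_forall_dvd_mul_of_span_eq_top {w : ι → R} (hw : Ideal.span (Set.range w) = ⊤)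
    {r s : R} (h : ∀ i, r ∣ s * w i) : r ∣ s := by
  have hle : Ideal.span (Set.range w) ≤ (Ideal.span {r}).colon {s} :=
    Ideal.span_le.2 <| Set.range_subset_iff.2 fun i => Submodule.mem_colon_singleton.2 <|
      Ideal.mem_span_singleton.2 <| by simpa only [smul_eq_mul, mul_comm] using h i
  have hone : (1 : R) ∈ (Ideal.span {r}).colon {s} := hle (hw ▸ Submodule.mem_top)
  rwa [Submodule.mem_colon_singleton, one_smul, Ideal.mem_span_singleton] at hone

lemma span_range_eq_top_of_pow_mem {κ : Type*} {w : ι → R} {w' : κ → R} {n : ℕ}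
    (hw : Ideal.span (Set.range w) = ⊤) (h : ∀ i, w i ^ n ∈ Ideal.span (Set.range w')) :
    Ideal.span (Set.range w') = ⊤ := by
  by_contra hne
  obtain ⟨M, hM, hle⟩ := Ideal.exists_le_maximal _ hne
  exact hM.ne_top <| top_le_iff.1 <| hw ▸
    Ideal.span_le.2 (Set.range_subset_iff.2 fun i => hM.isPrime.mem_of_pow_mem _ (hle (h i)))

lemma span_range_pair {a b : R} : Ideal.span (Set.range ![a, b]) = ⊤ ↔ IsCoprime a b := by
  rw [Matrix.range_cons_cons_empty, Ideal.span_insert, ← Ideal.isCoprime_iff_sup_eq,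
    Ideal.isCoprime_span_singleton_iff]

/-- Coordinates of the image of a pair of points under `ℙ¹ × ℙ¹ → Sym² ℙ¹ ≃ ℙ²`; these are the
coefficients of the product of the two linear forms with coefficients `x` and `y`. -/
def symSq (x y : Fin 2 → R) : Fin 3 → R :=
  ![x 0 * y 0, x 0 * y 1 + x 1 * y 0, x 1 * y 1]

lemma symSq_comm (x y : Fin 2 → R) : symSq x y = symSq y x := by
  simp only [symSq, mul_comm, add_comm]

lemma span_range_symSq_eq_top {x y : Fin 2 → R} (hx : Ideal.span (Set.range x) = ⊤)
    (hy : Ideal.span (Set.range y) = ⊤) : Ideal.span (Set.range (symSq x y)) = ⊤ := by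
  by_contra hne
  obtain ⟨M, hM, hle⟩ := Ideal.exists_le_maximal _ hne
  have hmem (i : Fin 3) : symSq x y i ∈ M := hle (Ideal.subset_span ⟨i, rfl⟩)
  have not_all_mem {z : Fin 2 → R} (hz : Ideal.span (Set.range z) = ⊤) : ¬ (z 0 ∈ M ∧ z 1 ∈ M) :=
    fun ⟨h0, h1⟩ => hM.ne_top <| top_le_iff.1 <| hz ▸
      Ideal.span_le.2 (Set.range_subset_iff.2 (Fin.forall_fin_two.2 ⟨h0, h1⟩))
  have h0 : x 0 * y 0 ∈ M := hmem 0
  have h1 : x 0 * y 1 + x 1 * y 0 ∈ M := hmem 1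
  have h2 : x 1 * y 1 ∈ M := hmem 2
  have hcross : x 0 * y 1 ∈ M ↔ x 1 * y 0 ∈ M := by
    constructor <;> intro h
    · exact (M.add_mem_iff_right h).1 h1
    · exact (M.add_mem_iff_left h).1 h1
  have hprime := hM.isPrime
  have hx' := not_all_mem hx
  have hy' := not_all_mem hy
  simp only [hprime.mul_mem_iff_mem_or_mem] at h0 h2 hcross
  tauto

namespace IsPrimitiveRep

lemma symSq {v v' : Fin 2 → K} {w w' : Fin 2 → R} (h : IsPrimitiveRep v w)
    (h' : IsPrimitiveRep v' w') : IsPrimitiveRep (symSq v v') (symSq w w') := by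
  obtain ⟨c, hc, hv⟩ := h.exists_eq_smul
  obtain ⟨c', hc', hv'⟩ := h'.exists_eq_smul
  refine ⟨span_range_symSq_eq_top h.span_range h'.span_range, c * c', mul_ne_zero hc hc', ?_⟩
  ext i
  fin_cases i <;> simp [_root_.symSq, hv, hv'] <;> ring

lemma of_smul {v : ι → K} {w : ι → R} {c : K} (hc : c ≠ 0) (h : IsPrimitiveRep (c • v) w) :
    IsPrimitiveRep v w := by
  obtain ⟨k, hk, hv⟩ := h.exists_eq_smul
  refine ⟨h.span_range, c⁻¹ * k, mul_ne_zero (inv_ne_zero hc) hk, ?_⟩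
  rw [mul_smul, ← hv, inv_smul_smul₀ hc]

lemma addSubMap {W : WeierstrassCurve R} [W.IsElliptic] {v : Fin 3 → K} {w : Fin 3 → R}
    (h : IsPrimitiveRep v w) :
    IsPrimitiveRep (fun i => ((W.map (algebraMap R K)).addSubMap i).eval v)
      (fun i => (W.addSubMap i).eval w) := by
  obtain ⟨c, hc, hv⟩ := h.exists_eq_smul
  refine ⟨span_range_eq_top_of_pow_mem (n := 4) h.span_range fun i => ?_, c ^ 2,
    pow_ne_zero 2 hc, ?_⟩
  · rw [← W.addSubMapCoeff_condition w i]
    exact Ideal.sum_mem _ fun j _ => Ideal.mul_mem_left _ _ (Ideal.subset_span ⟨j, rfl⟩)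
  · ext i
    fin_cases i <;> simp [WeierstrassCurve.addSubMap, hv, map_ofNat] <;> ring

variable [IsDomain R] [IsFractionRing R K]

lemma unique {v : ι → K} {w w' : ι → R} (h : IsPrimitiveRep v w) (h' : IsPrimitiveRep v w') :
    ∃ u : Rˣ, ∀ i, w' i = u * w i := by
  obtain ⟨c, -, hv⟩ := h.exists_eq_smul
  obtain ⟨c', hc', hv'⟩ := h'.exists_eq_smul
  obtain ⟨m, n, hn, hmn⟩ := IsFractionRing.div_surjective (A := R) (c / c')
  have hn0 : n ≠ 0 := nonZeroDivisors.ne_zero hn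
  have hcross (i : ι) : m * w i = n * w' i := by
    apply IsFractionRing.injective R K
    have hn0' : algebraMap R K n ≠ 0 := by simpa using hn0
    have hi : c * algebraMap R K (w i) = c' * algebraMap R K (w' i) :=
      congrFun (hv.symm.trans hv') i
    rw [div_eq_div_iff hn0' hc'] at hmn
    rw [map_mul, map_mul]
    apply mul_left_cancel₀ hc'
    linear_combination algebraMap R K (w i) * hmn + algebraMap R K n * hi
  have hnm : n ∣ m := dvd_of_forall_dvd_mul_of_span_eq_top h.span_range fun i => ⟨_, hcross i⟩
  have hmn : m ∣ n :=
    dvd_of_forall_dvd_mul_of_span_eq_top h'.span_range fun i => ⟨_, (hcross i).symm⟩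
  obtain ⟨u, rfl⟩ := associated_of_dvd_dvd hnm hmn
  refine ⟨u, fun i => mul_left_cancel₀ hn0 ?_⟩
  rw [← hcross i, mul_assoc]

lemma exists_of_ne_zero [IsPrincipalIdealRing R] [Finite ι] {v : ι → K} (hv : v ≠ 0) :
    ∃ w : ι → R, IsPrimitiveRep v w := by
  obtain ⟨b, hb⟩ := IsLocalization.exist_integer_multiples_of_finite (nonZeroDivisors R) v
  choose r hr using hb
  obtain ⟨g, hg⟩ := IsPrincipalIdealRing.principal (Ideal.span (Set.range r))
  rw [Ideal.submodule_span_eq] at hg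
  have hgr (i : ι) : g ∣ r i :=
    Ideal.mem_span_singleton.1 (hg ▸ Ideal.subset_span ⟨i, rfl⟩)
  choose w hw using hgr
  have hb0 : algebraMap R K b ≠ 0 := by simp
  have hbv (i : ι) : algebraMap R K b * v i = algebraMap R K g * algebraMap R K (w i) := by
    rw [← map_mul, ← hw, hr, Algebra.smul_def]
  have hg0 : g ≠ 0 := by
    rintro rfl
    exact hv (funext fun i => by simpa [hb0] using hbv i)
  refine ⟨w, ?_, algebraMap R K g / algebraMap R K b, div_ne_zero (by simpa using hg0) hb0, ?_⟩
  · have hr' : r = (g * ·) ∘ w := funext hw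
    have hmul : Ideal.span {g} * Ideal.span (Set.range w) = Ideal.span {g} * ⊤ := by
      rw [Ideal.span_mul_span', Set.singleton_mul, ← Set.range_comp, ← hr', hg, Ideal.mul_top]
    exact (Ideal.span_singleton_mul_right_inj hg0).1 hmul
  · ext i
    simp only [Pi.smul_apply, Function.comp_apply, smul_eq_mul]
    field_simp
    linear_combination hbv i

end IsPrimitiveRep

end PrimitiveRepresentatives

section AddSub

open WeierstrassCurve.Affine WeierstrassCurve.Affine.Point

variable {K : Type*} [Field K] {W : WeierstrassCurve.Affine K}

lemma eval_addSubMap_sym2x_self {x y : K} (h : W.Nonsingular x y) :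
    (fun i => (W.addSubMap i).eval ((some x y h).sym2x (some x y h))) =
      ![(3 * x ^ 2 + 2 * W.a₂ * x + W.a₄ - W.a₁ * y) ^ 2
          + W.a₁ * (3 * x ^ 2 + 2 * W.a₂ * x + W.a₄ - W.a₁ * y) * (y - W.negY x y)
          - (W.a₂ + 2 * x) * (y - W.negY x y) ^ 2,
        (y - W.negY x y) ^ 2, 0] := by
  have e := (equation_iff ..).1 h.1
  ext i
  fin_cases i <;> simp [WeierstrassCurve.addSubMap, WeierstrassCurve.b₂, WeierstrassCurve.b₄,
    WeierstrassCurve.b₆, WeierstrassCurve.b₈, negY]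
  · linear_combination (W.a₁ ^ 2 + 4 * (W.a₂ + 2 * x)) * e
  · linear_combination (-4) * e
  · ring

variable [DecidableEq K]

lemma xRep_add_of_X_ne {x₁ y₁ x₂ y₂ : K} (h₁ : W.Nonsingular x₁ y₁) (h₂ : W.Nonsingular x₂ y₂)
    (hx : x₁ ≠ x₂) : (some x₁ y₁ h₁ + some x₂ y₂ h₂).xRep = ((x₁ - x₂) ^ 2)⁻¹ •
      ![(y₁ - y₂) ^ 2 + W.a₁ * (y₁ - y₂) * (x₁ - x₂) - (W.a₂ + x₁ + x₂) * (x₁ - x₂) ^ 2,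
        (x₁ - x₂) ^ 2] := by
  have hx' : x₁ - x₂ ≠ 0 := sub_ne_zero.2 hx
  rw [add_of_X_ne hx, xRep_some, slope_of_X_ne hx, addX]
  ext i
  fin_cases i <;> simp <;> field_simp
  ring

lemma sym2x_add_sub_of_X_ne {x₁ y₁ x₂ y₂ : K} (h₁ : W.Nonsingular x₁ y₁)
    (h₂ : W.Nonsingular x₂ y₂) (hx : x₁ ≠ x₂) :
    (some x₁ y₁ h₁ + some x₂ y₂ h₂).sym2x (some x₁ y₁ h₁ - some x₂ y₂ h₂) =
      ((x₁ - x₂) ^ 2)⁻¹ •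
        fun i => (W.addSubMap i).eval ((some x₁ y₁ h₁).sym2x (some x₂ y₂ h₂)) := by
  have hx' : x₁ - x₂ ≠ 0 := sub_ne_zero.2 hx
  have e₁ := (equation_iff ..).1 h₁.1
  have e₂ := (equation_iff ..).1 h₂.1
  have hsub := xRep_add_of_X_ne h₁ ((nonsingular_neg ..).2 h₂) hx
  rw [← neg_some h₂, ← sub_eq_add_neg, negY] at hsub
  rw [sym2x, xRep_add_of_X_ne h₁ h₂ hx, hsub, sym2x_some_some]
  ext i
  fin_cases i <;> simp [WeierstrassCurve.addSubMap, WeierstrassCurve.b₂, WeierstrassCurve.b₄,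
    WeierstrassCurve.b₆, WeierstrassCurve.b₈] <;> field_simp
  · linear_combination (y₁ ^ 2 + W.a₁ * x₁ * y₁ + W.a₃ * y₁ - (y₂ ^ 2 + W.a₁ * x₂ * y₂ + W.a₃ * y₂)
      + (x₁ ^ 3 + W.a₂ * x₁ ^ 2 + W.a₄ * x₁ - (x₂ ^ 3 + W.a₂ * x₂ ^ 2 + W.a₄ * x₂))
      + W.a₁ * (x₁ - x₂) * (W.a₁ * x₁ + W.a₃)) * (e₁ - e₂)
      - 2 * (W.a₂ + x₁ + x₂) * (x₁ - x₂) ^ 2 * (e₁ + e₂) - W.a₁ ^ 2 * (x₁ - x₂) ^ 2 * e₁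
  · linear_combination 2 * e₁ + 2 * e₂
  · ring

lemma exists_sym2x_add_self_eq_smul (P : W.Point) : ∃ c : K, c ≠ 0 ∧
    (P + P).sym2x 0 = c • fun i => (W.addSubMap i).eval (P.sym2x P) := by
  obtain _ | ⟨x, y, h⟩ := P
  · refine ⟨1, one_ne_zero, ?_⟩
    ext i
    fin_cases i <;> simp [WeierstrassCurve.addSubMap, ← zero_def]
  rw [eval_addSubMap_sym2x_self h]
  by_cases hy : y = W.negY x y
  · have hX : 3 * x ^ 2 + 2 * W.a₂ * x + W.a₄ - W.a₁ * y ≠ 0 :=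
      sub_ne_zero.2 (((nonsingular_iff ..).1 h).2.resolve_right (not_not.2 hy)).symm
    refine ⟨_, inv_ne_zero (pow_ne_zero 2 hX), ?_⟩
    rw [add_self_of_Y_eq hy, sub_eq_zero.2 hy]
    simp [hX]
  · have hY : y - W.negY x y ≠ 0 := sub_ne_zero.2 hy
    refine ⟨_, inv_ne_zero (pow_ne_zero 2 hY), ?_⟩
    rw [add_self_of_Y_ne hy, sym2x_some_zero, slope_of_Y_ne rfl hy, addX]
    generalize y - W.negY x y = ψ at hY
    ext i
    fin_cases i <;> simp <;> field_simp
    ring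

lemma exists_sym2x_add_sub_eq_smul (P Q : W.Point) : ∃ c : K, c ≠ 0 ∧
    (P + Q).sym2x (P - Q) = c • fun i => (W.addSubMap i).eval (P.sym2x Q) := by
  by_cases hPQ : P.xRep = Q.xRep
  · obtain rfl | rfl := xRep_eq_xRep_iff.1 hPQ
    · simpa using exists_sym2x_add_self_eq_smul P
    · obtain ⟨c, hc, h⟩ := exists_sym2x_add_self_eq_smul Q
      refine ⟨c, hc, ?_⟩
      rw [neg_add_cancel, sym2x_comm, ← neg_add', sym2x_neg_left, sym2x_neg_left, h]
  · obtain _ | ⟨x₁, y₁, h₁⟩ := P <;> obtain _ | ⟨x₂, y₂, h₂⟩ := Q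
    · exact absurd rfl hPQ
    · refine ⟨1, one_ne_zero, ?_⟩
      ext i
      fin_cases i <;> simp [WeierstrassCurve.addSubMap, ← zero_def, sym2x] <;> ring
    · refine ⟨1, one_ne_zero, ?_⟩
      ext i
      fin_cases i <;> simp [WeierstrassCurve.addSubMap, ← zero_def, sym2x] <;> ring
    · have hx : x₁ ≠ x₂ := by rintro rfl; exact hPQ rfl
      exact ⟨_, inv_ne_zero (pow_ne_zero 2 (sub_ne_zero.2 hx)), sym2x_add_sub_of_X_ne h₁ h₂ hx⟩

end AddSub

section QuadraticTwist

open WeierstrassCurve.Affine WeierstrassCurve.Affine.Point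

/-- The quadratic twist `d * y ^ 2 = x ^ 3 + a₂ * x ^ 2 + a₄ * x + a₆` of a Weierstrass curve
`y ^ 2 = x ^ 3 + a₂ * x ^ 2 + a₄ * x + a₆`, made monic by the substitution
`(x, y) ↦ (d * x, d ^ 2 * y)`. The coefficients `a₁` and `a₃` are ignored. -/
def quadraticTwist {R : Type*} [CommRing R] (W : WeierstrassCurve R) (d : R) :
    WeierstrassCurve R :=
  ⟨0, d * W.a₂, 0, d ^ 2 * W.a₄, d ^ 3 * W.a₆⟩

lemma quadraticTwist_Δ {R : Type*} [CommRing R] (W : WeierstrassCurve R) [W.IsCharNeTwoNF]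
    (d : R) : (quadraticTwist W d).Δ = d ^ 6 * W.Δ := by
  simp only [quadraticTwist, WeierstrassCurve.Δ, WeierstrassCurve.b₂, WeierstrassCurve.b₄,
    WeierstrassCurve.b₆, WeierstrassCurve.b₈, W.a₁_of_isCharNeTwoNF, W.a₃_of_isCharNeTwoNF]
  ring

variable {K : Type*} [Field K] {d : K}

/-- Homogeneous coordinates of `x(P) / d`: for a point `P` of the twist by `d`, this is the
`x`-coordinate in the model `d * y ^ 2 = x ^ 3 + a₂ * x ^ 2 + a₄ * x + a₆`. -/
noncomputable def untwistedXRep {W' : WeierstrassCurve.Affine K} (d : K) (P : W'.Point) :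
    Fin 2 → K :=
  ![P.xRep 0, d * P.xRep 1]

lemma untwistedXRep_ne_zero {W' : WeierstrassCurve.Affine K} (hd : d ≠ 0) (P : W'.Point) :
    untwistedXRep d P ≠ 0 := by
  cases P <;> simp [untwistedXRep, xRep, hd]

lemma untwistedXRep_some {W' : WeierstrassCurve.Affine K} {x y : K}
    (h : W'.Nonsingular (d * x) y) : untwistedXRep d (some (d * x) y h) = d • ![x, 1] := by
  simp [untwistedXRep]

variable {W : WeierstrassCurve K}

lemma untwistedXRep_add_of_X_ne [DecidableEq K] {x₁ y₁ x₂ y₂ : K} (hd : d ≠ 0)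
    (h₁ : (quadraticTwist W d).toAffine.Nonsingular (d * x₁) (d ^ 2 * y₁))
    (h₂ : (quadraticTwist W d).toAffine.Nonsingular (d * x₂) (d ^ 2 * y₂)) (hx : x₁ ≠ x₂) :
    untwistedXRep d (some _ _ h₁ + some _ _ h₂) = (d / (x₁ - x₂) ^ 2) •
      ![d * (y₁ - y₂) ^ 2 - (W.a₂ + x₁ + x₂) * (x₁ - x₂) ^ 2, (x₁ - x₂) ^ 2] := by
  have hx' : x₁ - x₂ ≠ 0 := sub_ne_zero.2 hx
  rw [untwistedXRep, xRep_add_of_X_ne h₁ h₂ (mul_right_injective₀ hd |>.ne hx), ← mul_sub]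
  ext i
  fin_cases i <;> simp [quadraticTwist] <;> field_simp

variable [W.IsCharNeTwoNF]

lemma isElliptic_quadraticTwist [W.IsElliptic] (hd : d ≠ 0) : (quadraticTwist W d).IsElliptic :=
  ⟨quadraticTwist_Δ W d ▸ (pow_ne_zero 6 hd).isUnit.mul W.isUnit_Δ⟩

lemma nonsingular_quadraticTwist [W.IsElliptic] (hd : d ≠ 0) {x y : K}
    (h : d * y ^ 2 = x ^ 3 + W.a₂ * x ^ 2 + W.a₄ * x + W.a₆) :
    (quadraticTwist W d).toAffine.Nonsingular (d * x) (d ^ 2 * y) := by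
  have := isElliptic_quadraticTwist (W := W) hd
  rw [← equation_iff_nonsingular, equation_iff]
  simp only [quadraticTwist]
  linear_combination d ^ 3 * h

lemma eval_addSubMap_symSq_untwistedXRep (S T : (quadraticTwist W d).toAffine.Point) (i : Fin 3) :
    (W.addSubMap i).eval (symSq (untwistedXRep d S) (untwistedXRep d T)) =
      d ^ (i : ℕ) * ((quadraticTwist W d).addSubMap i).eval (S.sym2x T) := by
  fin_cases i <;> simp [WeierstrassCurve.addSubMap, quadraticTwist, symSq, untwistedXRep, sym2x,
    WeierstrassCurve.b₂, WeierstrassCurve.b₄, WeierstrassCurve.b₆, WeierstrassCurve.b₈] <;> ring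

lemma exists_symSq_untwistedXRep_add_sub_eq_smul [DecidableEq K]
    (S T : (quadraticTwist W d).toAffine.Point) :
    ∃ c : K, c ≠ 0 ∧ symSq (untwistedXRep d (S + T)) (untwistedXRep d (S - T)) =
      c • fun i => (W.addSubMap i).eval (symSq (untwistedXRep d S) (untwistedXRep d T)) := by
  obtain ⟨c, hc, h⟩ := exists_sym2x_add_sub_eq_smul S T
  refine ⟨c, hc, funext fun i => ?_⟩
  have hi : symSq (untwistedXRep d (S + T)) (untwistedXRep d (S - T)) i =
      d ^ (i : ℕ) * (S + T).sym2x (S - T) i := by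
    fin_cases i <;> simp [symSq, untwistedXRep, sym2x] <;> ring
  rw [hi, h, Pi.smul_apply, Pi.smul_apply, eval_addSubMap_symSq_untwistedXRep, smul_eq_mul,
    smul_eq_mul, mul_left_comm]

end QuadraticTwist

section TwistRepresentatives

open WeierstrassCurve.Affine WeierstrassCurve.Affine.Point

instance isCharNeTwoNF_map {R S : Type*} [CommRing R] [CommRing S] (W : WeierstrassCurve R)
    [W.IsCharNeTwoNF] (φ : R →+* S) : (W.map φ).IsCharNeTwoNF :=
  ⟨by simp, by simp⟩

variable {R K : Type*} [CommRing R] [Field K] [Algebra R K] [IsFractionRing R K]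
  {W : WeierstrassCurve R} [W.IsElliptic] [W.IsCharNeTwoNF] {d : R}

variable (K) in
lemma nonsingular_twistPoint (hd : d ≠ 0) {x y : R}
    (h : d * y ^ 2 = x ^ 3 + W.a₂ * x ^ 2 + W.a₄ * x + W.a₆) :
    (quadraticTwist (W.map (algebraMap R K)) (algebraMap R K d)).toAffine.Nonsingular
      (algebraMap R K d * algebraMap R K x) (algebraMap R K d ^ 2 * algebraMap R K y) :=
  nonsingular_quadraticTwist (by simpa using hd) (by simpa using congrArg (algebraMap R K) h)

variable (K) in
/-- The point `(x, y)` with coordinates in `R` on the model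
`d * y ^ 2 = x ^ 3 + a₂ * x ^ 2 + a₄ * x + a₆` of the quadratic twist over `K`. -/
noncomputable def twistPoint (hd : d ≠ 0) {x y : R}
    (h : d * y ^ 2 = x ^ 3 + W.a₂ * x ^ 2 + W.a₄ * x + W.a₆) :
    (quadraticTwist (W.map (algebraMap R K)) (algebraMap R K d)).toAffine.Point :=
  some _ _ (nonsingular_twistPoint K hd h)

lemma neg_twistPoint (hd : d ≠ 0) {x y : R}
    (h : d * y ^ 2 = x ^ 3 + W.a₂ * x ^ 2 + W.a₄ * x + W.a₆) :
    -twistPoint K hd h = twistPoint K hd (x := x) (y := -y) (by rw [neg_sq, h]) := by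
  rw [twistPoint, neg_some]
  simp [twistPoint, negY, quadraticTwist]

lemma isPrimitiveRep_twistPoint (hd : d ≠ 0) {x y : R}
    (h : d * y ^ 2 = x ^ 3 + W.a₂ * x ^ 2 + W.a₄ * x + W.a₆) :
    IsPrimitiveRep (untwistedXRep (algebraMap R K d) (twistPoint K hd h)) ![x, 1] := by
  refine ⟨span_range_pair.2 isCoprime_one_right, algebraMap R K d, by simpa using hd, ?_⟩
  rw [twistPoint, untwistedXRep_some]
  ext i
  fin_cases i <;> simp

variable [IsDomain R] [DecidableEq K]

lemma isPrimitiveRep_twistPoint_add (hd : d ≠ 0) {x₁ y₁ x₂ y₂ g P Q : R}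
    (h₁ : d * y₁ ^ 2 = x₁ ^ 3 + W.a₂ * x₁ ^ 2 + W.a₄ * x₁ + W.a₆)
    (h₂ : d * y₂ ^ 2 = x₂ ^ 3 + W.a₂ * x₂ ^ 2 + W.a₄ * x₂ + W.a₆) (hx : x₁ ≠ x₂)
    (hP : d * (y₁ - y₂) ^ 2 - (W.a₂ + x₁ + x₂) * (x₁ - x₂) ^ 2 = g * P)
    (hQ : (x₁ - x₂) ^ 2 = g * Q) (hPQ : IsCoprime P Q) :
    IsPrimitiveRep
      (untwistedXRep (algebraMap R K d) (twistPoint K hd h₁ + twistPoint K hd h₂)) ![P, Q] := by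
  have hinj := FaithfulSMul.algebraMap_injective R K
  have hd' : algebraMap R K d ≠ 0 := by simpa using hd
  have hx' : algebraMap R K x₁ ≠ algebraMap R K x₂ := hinj.ne hx
  have hg : g ≠ 0 := left_ne_zero_of_mul (hQ ▸ pow_ne_zero 2 (sub_ne_zero.2 hx))
  refine ⟨span_range_pair.2 hPQ,
    algebraMap R K d / (algebraMap R K x₁ - algebraMap R K x₂) ^ 2 * algebraMap R K g,
    mul_ne_zero (div_ne_zero hd' (pow_ne_zero 2 (sub_ne_zero.2 hx'))) (by simpa using hg), ?_⟩
  rw [twistPoint, twistPoint, untwistedXRep_add_of_X_ne hd' _ _ hx', mul_smul]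
  congr 1
  ext i
  fin_cases i
  · simpa using congrArg (algebraMap R K) hP
  · simpa using congrArg (algebraMap R K) hQ

lemma exists_symSq_eq_unit_mul_addSubMap
    {S T : (quadraticTwist (W.map (algebraMap R K)) (algebraMap R K d)).toAffine.Point}
    {w w' w₁ w₂ : Fin 2 → R}
    (hS : IsPrimitiveRep (untwistedXRep (algebraMap R K d) S) w)
    (hT : IsPrimitiveRep (untwistedXRep (algebraMap R K d) T) w')
    (hadd : IsPrimitiveRep (untwistedXRep (algebraMap R K d) (S + T)) w₁)
    (hsub : IsPrimitiveRep (untwistedXRep (algebraMap R K d) (S - T)) w₂) :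
    ∃ u : Rˣ, ∀ i, symSq w₁ w₂ i = u * (W.addSubMap i).eval (symSq w w') := by
  obtain ⟨c, hc, h⟩ := exists_symSq_untwistedXRep_add_sub_eq_smul S T
  exact (hS.symSq hT).addSubMap.unique (.of_smul hc (h ▸ hadd.symSq hsub))

end TwistRepresentatives

section DegreeRecurrence

open Polynomial

variable {F : Type*} [Field F]

lemma natDegree_addSubMap_of_natDegree_eq (W : WeierstrassCurve F) {s t u : F[X]} {n : ℕ}
    (hs : s.natDegree = n + 1) (ht : t.natDegree ≤ n) (hu : u.natDegree ≤ n)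
    (hsu : (s * u).natDegree ≤ 2 * n) :
    (((W.map C).addSubMap 0).eval ![s, t, u]).natDegree = 2 * n + 2 ∧
    (((W.map C).addSubMap 1).eval ![s, t, u]).natDegree ≤ 2 * n + 1 ∧
    (((W.map C).addSubMap 2).eval ![s, t, u]).natDegree ≤ 2 * n := by
  have htu : (t * u).natDegree ≤ 2 * n := natDegree_mul_le.trans (by lia)
  have hts : (t * s).natDegree ≤ 2 * n + 1 := natDegree_mul_le.trans (by lia)
  have hu2 : (u ^ 2).natDegree ≤ 2 * n := natDegree_pow_le.trans (by lia)
  have ht2 : (t ^ 2).natDegree ≤ 2 * n := natDegree_pow_le.trans (by lia)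
  have hs2 : (s ^ 2).natDegree = 2 * n + 2 := by rw [natDegree_pow, hs]; ring
  have hC {c : F} {m : ℕ} {g : F[X]} (hg : g.natDegree ≤ m) : (C c * g).natDegree ≤ m :=
    (natDegree_C_mul_le c g).trans hg
  have h0 : ((W.map C).addSubMap 0).eval ![s, t, u] =
      s ^ 2 - (C W.b₄ * (s * u) + C W.b₆ * (t * u) + C W.b₈ * u ^ 2) := by
    simp [WeierstrassCurve.addSubMap]
    ring
  have h1 : ((W.map C).addSubMap 1).eval ![s, t, u] =
      C 2 * (t * s) + (C W.b₂ * (s * u) + C W.b₄ * (t * u) + C W.b₆ * u ^ 2) := by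
    simp [WeierstrassCurve.addSubMap, map_ofNat]
    ring
  have h2 : ((W.map C).addSubMap 2).eval ![s, t, u] = t ^ 2 - C 4 * (s * u) := by
    simp [WeierstrassCurve.addSubMap, map_ofNat]
    ring
  have hlow (a b c : F) : (C a * (s * u) + C b * (t * u) + C c * u ^ 2).natDegree ≤ 2 * n :=
    natDegree_add_le_of_degree_le (natDegree_add_le_of_degree_le (hC hsu) (hC htu)) (hC hu2)
  refine ⟨?_, ?_, ?_⟩
  · rw [h0, natDegree_sub_eq_left_of_natDegree_lt ((hlow ..).trans_lt (by lia)), hs2]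
  · rw [h1]
    exact natDegree_add_le_of_degree_le (hC hts) ((hlow ..).trans (by lia))
  · rw [h2]
    exact (natDegree_sub_le_iff_left (hC hsu)).2 ht2

lemma degree_lt_of_natDegree_symSq {w₁ w₂ : Fin 2 → F[X]} {n : ℕ}
    (h0 : (symSq w₁ w₂ 0).natDegree = n + 2) (h1 : (symSq w₁ w₂ 1).natDegree ≤ n + 1)
    (h2 : (symSq w₁ w₂ 2).natDegree ≤ n) : (w₁ 1).degree < (w₁ 0).degree := by
  change (w₁ 0 * w₂ 0).natDegree = n + 2 at h0
  change (w₁ 0 * w₂ 1 + w₁ 1 * w₂ 0).natDegree ≤ n + 1 at h1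
  change (w₁ 1 * w₂ 1).natDegree ≤ n at h2
  have hne : w₁ 0 * w₂ 0 ≠ 0 := ne_zero_of_natDegree_gt (n := 0) (by lia)
  have hne₁ := left_ne_zero_of_mul hne
  have hne₂ := right_ne_zero_of_mul hne
  rw [natDegree_mul hne₁ hne₂] at h0
  by_contra! hle
  have hle' := natDegree_le_natDegree hle
  have hne' : w₁ 1 ≠ 0 := by
    rintro h
    simp [h, hne₁] at hle
  have hleft : (w₁ 0 * w₂ 1).natDegree ≤ n := by
    rcases eq_or_ne (w₂ 1) 0 with hzero | hzero
    · simp [hzero]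
    · rw [natDegree_mul hne' hzero] at h2
      exact natDegree_mul_le.trans (by lia)
  have hright : (w₁ 1 * w₂ 0).natDegree ≤ n + 1 :=
    (natDegree_add_le_iff_right _ _ (hleft.trans (by lia))).1 h1
  rw [natDegree_mul hne' hne₂] at hright
  lia

lemma degree_of_symSq_eq_unit_mul_addSubMap (W : WeierstrassCurve F) {w w₁ w₂ : Fin 2 → F[X]}
    {u : F[X]ˣ} (hw : (w 1).degree < (w 0).degree)
    (h : ∀ i, symSq w₁ w₂ i = u * ((W.map C).addSubMap i).eval (symSq w ![X, 1])) :
    (w₁ 1).degree < (w₁ 0).degree ∧ (w₂ 1).degree < (w₂ 0).degree ∧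
      (w₁ 0).natDegree + (w₂ 0).natDegree = 2 * (w 0).natDegree + 2 := by
  have hw0 : w 0 ≠ 0 := by
    rintro h0
    simp [h0] at hw
  have hXw : (w 1 * X).natDegree ≤ (w 0).natDegree := by
    rcases eq_or_ne (w 1) 0 with h1 | h1
    · simp [h1]
    · rw [natDegree_mul_X h1]
      exact natDegree_lt_natDegree h1 hw
  have hsymSq : symSq w ![X, 1] = ![w 0 * X, w 0 + w 1 * X, w 1] := by simp [symSq]
  have hdeg (i) : (symSq w₁ w₂ i).natDegree =
      (((W.map C).addSubMap i).eval ![w 0 * X, w 0 + w 1 * X, w 1]).natDegree := by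
    rw [h, hsymSq]
    exact natDegree_eq_natDegree (by rw [degree_mul, degree_coe_units, zero_add])
  obtain ⟨h0, h1, h2⟩ := natDegree_addSubMap_of_natDegree_eq W (natDegree_mul_X hw0)
    (natDegree_add_le_of_degree_le le_rfl hXw) (natDegree_le_natDegree hw.le)
    (by rw [mul_assoc, X_mul]; exact natDegree_mul_le.trans (by lia))
  rw [← hdeg] at h0 h1 h2
  have hcomm := symSq_comm w₁ w₂
  refine ⟨degree_lt_of_natDegree_symSq h0 h1 h2,
    degree_lt_of_natDegree_symSq (hcomm ▸ h0) (hcomm ▸ h1) (hcomm ▸ h2), ?_⟩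
  have hne : w₁ 0 * w₂ 0 ≠ 0 := ne_zero_of_natDegree_gt (n := 0) (h0.symm ▸ by lia)
  rw [← h0, ← natDegree_mul (left_ne_zero_of_mul hne) (right_ne_zero_of_mul hne)]
  rfl

variable {K : Type*} [Field K] [DecidableEq K] [Algebra F[X] K] [IsFractionRing F[X] K]
  {W : WeierstrassCurve F} [W.IsElliptic] [W.IsCharNeTwoNF] {d : F[X]}
  {S T : (quadraticTwist ((W.map C).map (algebraMap F[X] K)) (algebraMap F[X] K d)).toAffine.Point}
  {w : ℤ → Fin 2 → F[X]}

lemma degree_of_isPrimitiveRep_add_zsmul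
    (hw : ∀ n, IsPrimitiveRep (untwistedXRep (algebraMap F[X] K d) (S + n • T)) (w n))
    (hT : IsPrimitiveRep (untwistedXRep (algebraMap F[X] K d) T) (![X, 1] : _ → F[X])) {n : ℤ}
    (hn : (w n 1).degree < (w n 0).degree) :
    (w (n + 1) 1).degree < (w (n + 1) 0).degree ∧ (w (n - 1) 1).degree < (w (n - 1) 0).degree ∧
      (w (n + 1) 0).natDegree + (w (n - 1) 0).natDegree = 2 * (w n 0).natDegree + 2 := by
  have hadd := hw (n + 1)
  have hsub := hw (n - 1)
  rw [add_zsmul, one_zsmul, ← add_assoc] at hadd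
  rw [sub_zsmul, one_zsmul, ← sub_eq_add_neg, ← add_sub_assoc] at hsub
  obtain ⟨u, hu⟩ := exists_symSq_eq_unit_mul_addSubMap (hw n) hT hadd hsub
  exact degree_of_symSq_eq_unit_mul_addSubMap W hn hu

lemma degree_lt_of_isPrimitiveRep_add_zsmul
    (hw : ∀ n, IsPrimitiveRep (untwistedXRep (algebraMap F[X] K d) (S + n • T)) (w n))
    (hT : IsPrimitiveRep (untwistedXRep (algebraMap F[X] K d) T) (![X, 1] : _ → F[X]))
    (h0 : (w 0 1).degree < (w 0 0).degree) (n : ℤ) : (w n 1).degree < (w n 0).degree := by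
  induction n using Int.induction_on with
  | zero => exact h0
  | succ i ih => exact (degree_of_isPrimitiveRep_add_zsmul hw hT ih).1
  | pred i ih => exact (degree_of_isPrimitiveRep_add_zsmul hw hT ih).2.1

end DegreeRecurrence

section QuadraticCharFactors

open Finset Polynomial

variable {F : Type*} [Field F] [Fintype F] [DecidableEq F]

/-- The product of `X - r` over the `r` with `quadraticChar F (f r) = s`. For `s = 0, 1, -1` these
are the factors of `X ^ q - X` in which `f`, `f ^ (q / 2) - 1` and `f ^ (q / 2) + 1` vanish. -/
noncomputable def charFactor (f : F[X]) (s : ℤ) : F[X] :=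
  ∏ r with quadraticChar F (f.eval r) = s, (X - C r)

variable {f g : F[X]} {s : ℤ}

lemma monic_charFactor : (charFactor f s).Monic :=
  monic_prod_X_sub_C _ _

lemma natDegree_charFactor :
    (charFactor f s).natDegree = #{r | quadraticChar F (f.eval r) = s} :=
  natDegree_finsetProd_X_sub_C_eq_card _ _

lemma charFactor_dvd (h : ∀ r, quadraticChar F (f.eval r) = s → g.eval r = 0) :
    charFactor f s ∣ g :=
  prod_dvd_of_coprime
    (fun _ _ _ _ hne => pairwise_coprime_X_sub_C Function.injective_id hne)
    fun r hr => dvd_iff_isRoot.2 (h r (mem_filter.1 hr).2)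

lemma isCoprime_charFactor (h : ∀ r, quadraticChar F (f.eval r) = s → g.eval r ≠ 0) :
    IsCoprime g (charFactor f s) :=
  IsCoprime.prod_right fun r hr => IsCoprime.symm <|
    (irreducible_X_sub_C r).coprime_iff_not_dvd.2 fun hdvd =>
      h r (mem_filter.1 hr).2 (dvd_iff_isRoot.1 hdvd)

lemma quadraticChar_mem (a : F) : quadraticChar F a ∈ ({0, 1, -1} : Finset ℤ) := by
  simpa using quadraticChar_isQuadratic F a

lemma prod_charFactor (f : F[X]) :
    charFactor f 0 * charFactor f 1 * charFactor f (-1) = X ^ Fintype.card F - X := by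
  have hfiber := prod_fiberwise_of_maps_to (s := univ)
    (fun r _ => quadraticChar_mem (f.eval r)) fun r => X - C r
  have hq : (X ^ Fintype.card F - X : F[X]).natDegree = Fintype.card F :=
    FiniteField.X_pow_card_sub_X_natDegree_eq F Fintype.one_lt_card
  have hmonic : (X ^ Fintype.card F - X : F[X]).Monic :=
    monic_X_pow_sub (by simpa using Fintype.one_lt_card)
  have hroots := prod_multiset_X_sub_C_of_monic_of_roots_card_eq hmonic
    (by simp [FiniteField.roots_X_pow_card_sub_X, hq])
  rw [FiniteField.roots_X_pow_card_sub_X] at hroots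
  simpa [charFactor, ← mul_assoc] using hfiber.trans hroots

lemma X_pow_card_sub_X_sq_eq_charFactor_mul (f : F[X]) (ε : ℤˣ) :
    (X ^ Fintype.card F - X) ^ 2 =
      charFactor f 0 * charFactor f ε ^ 2 * (charFactor f 0 * charFactor f (-ε) ^ 2) := by
  rw [← prod_charFactor f]
  rcases Int.units_eq_one_or ε with rfl | rfl <;>
    simp only [Units.val_neg, Units.val_one, neg_neg] <;> ring

lemma natDegree_charFactor_add (f : F[X]) :
    (charFactor f 0).natDegree + (charFactor f 1).natDegree + (charFactor f (-1)).natDegree =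
      Fintype.card F := by
  rw [← monic_charFactor.natDegree_mul monic_charFactor,
    ← (monic_charFactor.mul monic_charFactor).natDegree_mul monic_charFactor, prod_charFactor,
    FiniteField.X_pow_card_sub_X_natDegree_eq F Fintype.one_lt_card]

lemma sum_quadraticChar_eval (f : F[X]) :
    ∑ r, quadraticChar F (f.eval r) =
      (charFactor f 1).natDegree - (charFactor f (-1)).natDegree := by
  rw [← sum_fiberwise_of_maps_to' (fun r _ => quadraticChar_mem (f.eval r)) fun s => s]
  simp [natDegree_charFactor, sub_eq_add_neg]

lemma exists_eq_charFactor_mul_of_separable (hf : f.Separable) :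
    ∃ G, f = charFactor f 0 * G ∧ ∀ s, IsCoprime G (charFactor f s) := by
  obtain ⟨G, hG⟩ : charFactor f 0 ∣ f := charFactor_dvd fun r hr => quadraticChar_eq_zero_iff.1 hr
  refine ⟨G, hG, fun s => ?_⟩
  rcases eq_or_ne s 0 with rfl | hs
  · exact (hG ▸ hf).isCoprime.symm
  · refine isCoprime_charFactor fun r hr hzero => hs ?_
    rw [← hr, hG, eval_mul, hzero, mul_zero, quadraticChar_zero]

lemma exists_pow_sub_eq_charFactor_mul (hF : ringChar F ≠ 2) (f : F[X]) (ε : ℤˣ) :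
    ∃ E, f ^ (Fintype.card F / 2) - C ((ε : ℤ) : F) = charFactor f ε * E ∧
      IsCoprime E (charFactor f 0) ∧ IsCoprime E (charFactor f (-ε)) := by
  have heval (r : F) : (f ^ (Fintype.card F / 2) - C ((ε : ℤ) : F)).eval r =
      ((quadraticChar F (f.eval r) - ε : ℤ) : F) := by
    rw [eval_sub, eval_pow, eval_C, Int.cast_sub, quadraticChar_eq_pow_of_char_ne_two' hF]
  obtain ⟨E, hE⟩ : charFactor f ε ∣ f ^ (Fintype.card F / 2) - C ((ε : ℤ) : F) :=
    charFactor_dvd fun r hr => by rw [heval, hr, sub_self, Int.cast_zero]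
  have hcoprime {s : ℤ} (hs : ((s - ε : ℤ) : F) ≠ 0) : IsCoprime E (charFactor f s) := by
    refine isCoprime_charFactor fun r hr hzero => hs ?_
    rw [← hr, ← heval, hE, eval_mul, hzero, mul_zero]
  have h2 : (2 : F) ≠ 0 := Ring.two_ne_zero hF
  refine ⟨E, hE, hcoprime ?_, hcoprime ?_⟩ <;>
    rcases Int.units_eq_one_or ε with rfl | rfl <;> simp [← two_mul, h2]

end QuadraticCharFactors

section FrobeniusTranslates

open Polynomial

/-- The right hand side of the equation `y ^ 2 = x ^ 3 + a₂ * x ^ 2 + a₄ * x + a₆` of a Weierstrass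
curve with `a₁ = a₃ = 0`. -/
noncomputable def weierstrassCubic {R : Type*} [CommRing R] (W : WeierstrassCurve R) : R[X] :=
  X ^ 3 + C W.a₂ * X ^ 2 + C W.a₄ * X + C W.a₆

lemma eval_weierstrassCubic {R : Type*} [CommRing R] (W : WeierstrassCurve R) (x : R) :
    (weierstrassCubic W).eval x = x ^ 3 + W.a₂ * x ^ 2 + W.a₄ * x + W.a₆ := by
  simp [weierstrassCubic]

lemma weierstrassCubic_mul_C_unit_sq {R : Type*} [CommRing R] (W : WeierstrassCurve R)
    (ε : ℤˣ) :
    weierstrassCubic W * C ((ε : ℤ) : R) ^ 2 =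
      X ^ 3 + (W.map C).a₂ * X ^ 2 + (W.map C).a₄ * X + (W.map C).a₆ := by
  rcases Int.units_eq_one_or ε with rfl | rfl <;> simp [weierstrassCubic]

variable {F : Type*} [Field F] {W : WeierstrassCurve F}

lemma weierstrassCubic_ne_zero : weierstrassCubic W ≠ 0 := by
  have hmonic : (weierstrassCubic W).Monic := by unfold weierstrassCubic; monicity!
  exact hmonic.ne_zero

lemma separable_weierstrassCubic [W.IsElliptic] [W.IsCharNeTwoNF] :
    (weierstrassCubic W).Separable := by
  have hΔ : W.Δ ≠ 0 := W.isUnit_Δ.ne_zero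
  have hdisc : 16 / W.Δ * (W.a₂ ^ 2 * W.a₄ ^ 2 - 4 * W.a₄ ^ 3 - 4 * W.a₂ ^ 3 * W.a₆ +
      18 * W.a₂ * W.a₄ * W.a₆ - 27 * W.a₆ ^ 2) = 1 := by
    rw [div_mul_eq_mul_div, div_eq_one_iff_eq hΔ, WeierstrassCurve.Δ_of_isCharNeTwoNF]
    ring
  -- The cofactors in the Bézout identity for the discriminant of a monic cubic.
  refine ⟨C (16 / W.Δ) * (C (-6 * W.a₂ ^ 2 + 18 * W.a₄) * X +
      C (-4 * W.a₂ ^ 3 + 15 * W.a₂ * W.a₄ - 27 * W.a₆)),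
    C (16 / W.Δ) * (C (2 * W.a₂ ^ 2 - 6 * W.a₄) * X ^ 2 +
      C (2 * W.a₂ ^ 3 - 7 * W.a₂ * W.a₄ + 9 * W.a₆) * X +
      C (W.a₂ ^ 2 * W.a₄ - 4 * W.a₄ ^ 2 + 3 * W.a₂ * W.a₆)), ?_⟩
  rw [← C_1, ← hdisc]
  simp only [weierstrassCubic, derivative_mul, derivative_X_pow_succ, derivative_X,
    derivative_C, Nat.cast_ofNat, Nat.cast_one, map_add, map_sub, map_mul, map_neg, map_pow,
    map_ofNat, map_one]
  ring

lemma weierstrassCubic_mul_pow_half_card_sq [Fintype F] (hF : ringChar F ≠ 2)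
    (W : WeierstrassCurve F) :
    weierstrassCubic W * (weierstrassCubic W ^ (Fintype.card F / 2)) ^ 2 =
      (X ^ Fintype.card F) ^ 3 + (W.map C).a₂ * (X ^ Fintype.card F) ^ 2 +
        (W.map C).a₄ * X ^ Fintype.card F + (W.map C).a₆ := by
  have hodd := FiniteField.odd_card_of_char_ne_two hF
  rw [← pow_mul, ← pow_succ', show Fintype.card F / 2 * 2 + 1 = Fintype.card F by lia,
    ← FiniteField.expand_card]
  simp [weierstrassCubic, expand_eq_comp_X_pow]

variable (K : Type*) [Field K] [Algebra F[X] K] [IsFractionRing F[X] K]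
  (W : WeierstrassCurve F) [W.IsElliptic] [W.IsCharNeTwoNF]

/-- The curve `f * y ^ 2 = f(x)` over a fraction field `K` of `F[X]`, where `y ^ 2 = f(x)` is the
equation of `W`. -/
noncomputable abbrev tautologicalTwist : WeierstrassCurve.Affine K :=
  (quadraticTwist ((W.map C).map (algebraMap F[X] K))
    (algebraMap F[X] K (weierstrassCubic W))).toAffine

/-- The point `(X, 1)` of the curve `f * y ^ 2 = f(x)`. -/
noncomputable def tautologicalPoint : (tautologicalTwist K W).Point :=
  twistPoint K weierstrassCubic_ne_zero (x := X) (y := 1)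
    (by simpa using weierstrassCubic_mul_C_unit_sq W 1)

lemma isPrimitiveRep_tautologicalPoint :
    IsPrimitiveRep (untwistedXRep (algebraMap F[X] K (weierstrassCubic W))
      (tautologicalPoint K W)) (![X, 1] : _ → F[X]) :=
  isPrimitiveRep_twistPoint _ _

lemma zsmul_tautologicalPoint [DecidableEq K] (ε : ℤˣ) :
    (ε : ℤ) • tautologicalPoint K W =
      twistPoint K weierstrassCubic_ne_zero (weierstrassCubic_mul_C_unit_sq W ε) := by
  rcases Int.units_eq_one_or ε with rfl | rfl
  · simp [tautologicalPoint]
  · simp [tautologicalPoint, neg_twistPoint]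

variable [Fintype F]

/-- The point `(X ^ q, f ^ ((q - 1) / 2))` of the curve `f * y ^ 2 = f(x)`, where `q` is the number
of elements of `F`. -/
noncomputable def frobeniusPoint (hF : ringChar F ≠ 2) : (tautologicalTwist K W).Point :=
  twistPoint K weierstrassCubic_ne_zero (weierstrassCubic_mul_pow_half_card_sq hF W)

lemma isPrimitiveRep_frobeniusPoint (hF : ringChar F ≠ 2) :
    IsPrimitiveRep (untwistedXRep (algebraMap F[X] K (weierstrassCubic W))
      (frobeniusPoint K W hF)) (![X ^ Fintype.card F, 1] : _ → F[X]) :=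
  isPrimitiveRep_twistPoint _ _

variable [DecidableEq F] [DecidableEq K]

/-- The numerator and denominator given by the chord formula for the `x`-coordinate of
`frobeniusPoint + ε • tautologicalPoint` share the factor `charFactor f 0 * charFactor f ε ^ 2`,
and nothing else. -/
lemma exists_isPrimitiveRep_frobeniusPoint_add (hF : ringChar F ≠ 2) (ε : ℤˣ) :
    ∃ P, IsPrimitiveRep (untwistedXRep (algebraMap F[X] K (weierstrassCubic W))
      (frobeniusPoint K W hF + (ε : ℤ) • tautologicalPoint K W))
      ![P, charFactor (weierstrassCubic W) 0 * charFactor (weierstrassCubic W) (-ε) ^ 2] := by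
  obtain ⟨G, hG, hcoprimeG⟩ := exists_eq_charFactor_mul_of_separable
    (separable_weierstrassCubic (W := W))
  obtain ⟨E, hE, hE0, hEneg⟩ := exists_pow_sub_eq_charFactor_mul hF (weierstrassCubic W) ε
  set f := weierstrassCubic W
  set D := charFactor f
  set Q := D 0 * D (-ε) ^ 2
  have hQ : (X ^ Fintype.card F - X) ^ 2 = D 0 * D ε ^ 2 * Q :=
    X_pow_card_sub_X_sq_eq_charFactor_mul f ε
  have hcoprime : IsCoprime (G * E ^ 2) Q :=
    .mul_left (.mul_right (hcoprimeG 0) (hcoprimeG _).pow_right)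
      (.pow_left (.mul_right hE0 hEneg.pow_right))
  refine ⟨G * E ^ 2 + Q * -((W.map C).a₂ + X ^ Fintype.card F + X), ?_⟩
  rw [zsmul_tautologicalPoint, frobeniusPoint]
  refine isPrimitiveRep_twistPoint_add _ _ _ ?_ ?_ hQ (hcoprime.add_mul_left_left _)
  · exact sub_ne_zero.1 (FiniteField.X_pow_card_sub_X_ne_zero F Fintype.one_lt_card)
  · rw [hE, hQ]
    linear_combination (D ε * E) ^ 2 * hG

end FrobeniusTranslates

section IntegerQuadratics

lemma eq_sq_add_of_second_difference_eq_two {d : ℤ → ℤ}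
    (hd : ∀ n, d (n + 1) + d (n - 1) = 2 * d n + 2) (n : ℤ) :
    d n = n ^ 2 + (d 1 - d 0 - 1) * n + d 0 := by
  suffices hpair : d n = n ^ 2 + (d 1 - d 0 - 1) * n + d 0 ∧
      d (n + 1) = (n + 1) ^ 2 + (d 1 - d 0 - 1) * (n + 1) + d 0 from hpair.1
  induction n using Int.induction_on with
  | zero => exact ⟨by ring, by rw [zero_add]; ring⟩
  | succ i ih =>
    have hi := hd (i + 1)
    rw [add_sub_cancel_right] at hi
    exact ⟨ih.2, by linear_combination hi + 2 * ih.2 - ih.1⟩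
  | pred i ih =>
    exact ⟨by linear_combination hd (-i) + 2 * ih.1 - ih.2, by rw [sub_add_cancel]; exact ih.1⟩

lemma sq_le_four_mul_of_forall_nonneg {q t : ℤ} (hq : Odd q) (h : ∀ n, 0 ≤ n ^ 2 - t * n + q) :
    t ^ 2 ≤ 4 * q := by
  obtain ⟨k, rfl | rfl⟩ := Int.even_or_odd' t
  · linear_combination 4 * h k
  · have hne : k * (k + 1) ≠ q := fun heq =>
      Int.not_even_iff_odd.2 hq (heq ▸ Int.even_mul_succ_self k)
    have hle : k * (k + 1) ≤ q := by linear_combination h k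
    have hlt : k * (k + 1) + 1 ≤ q := lt_of_le_of_ne hle hne
    linear_combination 4 * hlt

end IntegerQuadratics

section HasseBound

open Polynomial

lemma IsPrimitiveRep.degree_eq {F K ι : Type*} [Field F] [Field K] [Algebra F[X] K]
    [IsFractionRing F[X] K] {v : ι → K} {w w' : ι → F[X]} (h : IsPrimitiveRep v w)
    (h' : IsPrimitiveRep v w') (i : ι) : (w i).degree = (w' i).degree := by
  obtain ⟨u, hu⟩ := h.unique h'
  rw [hu, degree_mul, degree_coe_units, zero_add]

variable {F : Type*} [Field F] [Fintype F] [DecidableEq F] {W : WeierstrassCurve F} [W.IsElliptic]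
  [W.IsCharNeTwoNF] {K : Type*} [Field K] [DecidableEq K] [Algebra F[X] K]
  [IsFractionRing F[X] K] {hF : ringChar F ≠ 2}

lemma natDegree_charFactor_add_lt_of_isPrimitiveRep {ε : ℤˣ} {w : Fin 2 → F[X]}
    (hw : IsPrimitiveRep (untwistedXRep (algebraMap F[X] K (weierstrassCubic W))
      (frobeniusPoint K W hF + (ε : ℤ) • tautologicalPoint K W)) w)
    (hdegree : (w 1).degree < (w 0).degree) :
    (charFactor (weierstrassCubic W) 0).natDegree +
      2 * (charFactor (weierstrassCubic W) (-ε)).natDegree < (w 0).natDegree := by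
  obtain ⟨P, hP⟩ := exists_isPrimitiveRep_frobeniusPoint_add K W hF ε
  have hw₁ : w 1 ≠ 0 := by
    rw [← degree_ne_bot, hw.degree_eq hP 1, degree_ne_bot]
    exact (monic_charFactor.mul (monic_charFactor.pow 2)).ne_zero
  calc _ = (w 1).natDegree := by
        rw [natDegree_eq_natDegree (hw.degree_eq hP 1)]
        exact (monic_charFactor.natDegree_mul (monic_charFactor.pow 2)).trans
          (by rw [monic_charFactor.natDegree_pow]) |>.symm
    _ < (w 0).natDegree := natDegree_lt_natDegree hw₁ hdegree

/-- The degrees `d n` satisfy `d (n + 1) + d (n - 1) = 2 * d n + 2` and `d 0 = q`. The lower bounds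
for `d 1` and `d (-1)` add up to `2 * q + 2 = d 1 + d (-1)`, hence are sharp. -/
lemma natDegree_of_isPrimitiveRep_frobeniusPoint_add_zsmul {w : ℤ → Fin 2 → F[X]}
    (hw : ∀ n, IsPrimitiveRep (untwistedXRep (algebraMap F[X] K (weierstrassCubic W))
      (frobeniusPoint K W hF + n • tautologicalPoint K W)) (w n)) (n : ℤ) :
    ((w n 0).natDegree : ℤ) =
      n ^ 2 - (∑ r, quadraticChar F ((weierstrassCubic W).eval r)) * n + Fintype.card F := by
  have hT := isPrimitiveRep_tautologicalPoint K W
  have hdegree₀ (i : Fin 2) : (w 0 i).degree = (![X ^ Fintype.card F, 1] i : F[X]).degree := by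
    refine IsPrimitiveRep.degree_eq ?_ (isPrimitiveRep_frobeniusPoint K W hF) i
    simpa only [zero_zsmul, add_zero] using hw 0
  have hlt := degree_lt_of_isPrimitiveRep_add_zsmul hw hT
    (by rw [hdegree₀, hdegree₀]; simpa using Fintype.card_pos)
  have hrec (n : ℤ) := (degree_of_isPrimitiveRep_add_zsmul hw hT (hlt n)).2.2
  have hzero : (w 0 0).natDegree = Fintype.card F := by
    simpa using natDegree_eq_natDegree (hdegree₀ 0)
  have hone := natDegree_charFactor_add_lt_of_isPrimitiveRep (ε := 1) (hw 1) (hlt 1)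
  have hneg := natDegree_charFactor_add_lt_of_isPrimitiveRep (ε := -1) (hw (-1)) (hlt (-1))
  have hsum := hrec 0
  have hcard := natDegree_charFactor_add (weierstrassCubic W)
  rw [eq_sq_add_of_second_difference_eq_two (d := fun n => (w n 0).natDegree)
    (fun n => by exact_mod_cast hrec n) n, sum_quadraticChar_eval, hzero]
  simp only [Units.val_neg, Units.val_one, neg_neg, zero_add, zero_sub] at hone hneg hsum
  have hone_eq : ((w 1 0).natDegree : ℤ) = (charFactor (weierstrassCubic W) 0).natDegree +
      2 * (charFactor (weierstrassCubic W) (-1)).natDegree + 1 := by lia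
  rw [hone_eq, ← hcard]
  push_cast
  ring

theorem sq_sum_quadraticChar_weierstrassCubic_le (hF : ringChar F ≠ 2) :
    (∑ r, quadraticChar F ((weierstrassCubic W).eval r)) ^ 2 ≤ 4 * Fintype.card F := by
  classical
  have hd : algebraMap F[X] (RatFunc F) (weierstrassCubic W) ≠ 0 := by
    simpa using weierstrassCubic_ne_zero
  choose w hw using fun n : ℤ => IsPrimitiveRep.exists_of_ne_zero (R := F[X])
    (untwistedXRep_ne_zero hd (frobeniusPoint (RatFunc F) W hF + n • tautologicalPoint _ W))
  refine sq_le_four_mul_of_forall_nonneg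
    (by exact_mod_cast Nat.odd_iff.2 (FiniteField.odd_card_of_char_ne_two hF)) fun n => ?_
  rw [← natDegree_of_isPrimitiveRep_frobeniusPoint_add_zsmul hw]
  positivity

end HasseBound

section Counting

open Finset

variable {F : Type*} [Field F] [Fintype F] [DecidableEq F]

lemma card_filter_eq_sq (hF : ringChar F ≠ 2) (u : F) :
    (#{y | u = y ^ 2} : ℤ) = quadraticChar F u + 1 := by
  rw [← quadraticChar_card_sqrts hF, Set.toFinset_ofPred]
  simp only [eq_comm]

lemma sum_comp_sq (hF : ringChar F ≠ 2) (g : F → ℤ) :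
    ∑ x, g (x ^ 2) = ∑ u, (quadraticChar F u + 1) * g u := by
  rw [← sum_fiberwise' _ (· ^ 2) g]
  simp only [sum_const, nsmul_eq_mul, ← card_filter_eq_sq hF, eq_comm]

lemma sum_quadraticChar_add (hF : ringChar F ≠ 2) (a : F) :
    ∑ u, quadraticChar F (u + a) = 0 :=
  (Equiv.sum_comp (Equiv.addRight a) _).trans (quadraticChar_sum_zero hF)

/-- The substitution `u = -(b - a) * v - a` turns the sum into a Jacobi sum. -/
lemma sum_quadraticChar_add_mul_add (hF : ringChar F ≠ 2) {a b : F} (hab : a ≠ b) :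
    ∑ u, quadraticChar F (u + a) * quadraticChar F (u + b) = -1 := by
  set χ := quadraticChar F
  have hba : b - a ≠ 0 := sub_ne_zero.2 hab.symm
  have hJacobi : jacobiSum χ χ = -χ (-1) := by
    simpa only [(quadraticChar_isQuadratic F).inv] using
      jacobiSum_nontrivial_inv (quadraticChar_ne_one hF)
  have hsubst (v : F) : χ (-(b - a) * v - a + a) * χ (-(b - a) * v - a + b) =
      χ (-1) * (χ v * χ (1 - v)) := by
    rw [show -(b - a) * v - a + a = -1 * (b - a) * v by ring,
      show -(b - a) * v - a + b = (b - a) * (1 - v) by ring, map_mul, map_mul, map_mul]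
    linear_combination χ (-1) * χ v * χ (1 - v) * quadraticChar_sq_one hba
  let e : F ≃ F := (Equiv.mulLeft₀ _ (neg_ne_zero.2 hba)).trans (Equiv.subRight a)
  calc ∑ u, χ (u + a) * χ (u + b)
      = ∑ v, χ (-1) * (χ v * χ (1 - v)) := by
        rw [← e.sum_comp]
        exact sum_congr rfl fun v _ => hsubst v
    _ = χ (-1) * -χ (-1) := by rw [← mul_sum, ← hJacobi, jacobiSum]
    _ = -1 := by rw [mul_neg, ← sq, quadraticChar_sq_one (neg_ne_zero.2 one_ne_zero)]

lemma natCard_two_quadratics_eq (hF : ringChar F ≠ 2) {a b : F} (ha : a ≠ 0) (hb : b ≠ 0)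
    (hab : a ≠ b) :
    (Nat.card {t : F × F × F // t.1 ^ 2 + a = t.2.1 ^ 2 ∧ t.1 ^ 2 + b = t.2.2 ^ 2} : ℤ) =
      Fintype.card F - 3 + ∑ u, quadraticChar F (u * (u + a) * (u + b)) := by
  set χ := quadraticChar F
  calc _ = ∑ x : F, (#{y | x ^ 2 + a = y ^ 2} * #{z | x ^ 2 + b = z ^ 2} : ℤ) := by
        rw [Nat.card_eq_fintype_card, Fintype.card_subtype, card_filter,
          Fintype.sum_prod_type]
        simp only [Fintype.sum_prod_type, ite_and]
        simp [sum_ite]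
    _ = ∑ u, (χ u + 1) * ((χ (u + a) + 1) * (χ (u + b) + 1)) := by
        simp only [card_filter_eq_sq hF]
        exact sum_comp_sq hF fun u => (χ (u + a) + 1) * (χ (u + b) + 1)
    _ = ∑ u, (χ (u * (u + a) * (u + b)) + χ u * χ (u + a) + χ u * χ (u + b) +
          χ (u + a) * χ (u + b) + χ u + χ (u + a) + χ (u + b) + 1) :=
        sum_congr rfl fun u _ => by rw [map_mul, map_mul]; ring
    _ = _ := by
        have hpair₁ := sum_quadraticChar_add_mul_add hF ha.symm
        have hpair₂ := sum_quadraticChar_add_mul_add hF hb.symm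
        simp only [add_zero] at hpair₁ hpair₂
        simp only [sum_add_distrib, χ, hpair₁, hpair₂, sum_quadraticChar_add_mul_add hF hab,
          sum_quadraticChar_add hF, quadraticChar_sum_zero hF]
        simp only [sum_const, card_univ, nsmul_eq_mul, mul_one]
        ring

theorem sq_sum_quadraticChar_mul_add_mul_add_le (hF : ringChar F ≠ 2) {a b : F} (ha : a ≠ 0)
    (hb : b ≠ 0) (hab : a ≠ b) :
    (∑ u, quadraticChar F (u * (u + a) * (u + b))) ^ 2 ≤ 4 * Fintype.card F := by
  set W : WeierstrassCurve F := ⟨0, a + b, 0, a * b, 0⟩ with hW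
  have : W.IsCharNeTwoNF := ⟨rfl, rfl⟩
  have hΔ : W.Δ = 16 * (a * b * (a - b)) ^ 2 := by
    rw [W.Δ_of_isCharNeTwoNF, hW]
    ring
  have h16 : (16 : F) ≠ 0 := by
    simpa [show (2 : F) ^ 4 = 16 by norm_num] using pow_ne_zero 4 (Ring.two_ne_zero hF)
  have : W.IsElliptic := ⟨by
    rw [hΔ, isUnit_iff_ne_zero]
    exact mul_ne_zero h16 (pow_ne_zero 2 (mul_ne_zero (mul_ne_zero ha hb) (sub_ne_zero.2 hab)))⟩
  have hcubic (u : F) : (weierstrassCubic W).eval u = u * (u + a) * (u + b) := by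
    rw [eval_weierstrassCubic, hW]
    ring
  simpa only [hcubic] using sq_sum_quadraticChar_weierstrassCubic_le (W := W) hF

end Counting

theorem two_quadratics_count_general {F : Type*} [Field F] [Fintype F] (hF : ringChar F ≠ 2)
    {a b : F} (ha : a ≠ 0)
    (hb : b ≠ 0) (hab : a ≠ b) :
    |(Nat.card {t : F × F × F // t.1 ^ 2 + a = t.2.1 ^ 2 ∧ t.1 ^ 2 + b = t.2.2 ^ 2} : ℝ) -
        ((Fintype.card F : ℝ) - 3)| ≤ 2 * Real.sqrt (Fintype.card F) := by
  classical
  have hcount := natCard_two_quadratics_eq hF ha hb hab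
  have hHasse := sq_sum_quadraticChar_mul_add_mul_add_le hF ha hb hab
  set s := ∑ u, quadraticChar F (u * (u + a) * (u + b))
  have hcount' :
      (Nat.card {t : F × F × F // t.1 ^ 2 + a = t.2.1 ^ 2 ∧ t.1 ^ 2 + b = t.2.2 ^ 2} : ℝ) -
      ((Fintype.card F : ℝ) - 3) = s := by
    rw [sub_eq_iff_eq_add']
    exact_mod_cast hcount
  have hHasse' : (s : ℝ) ^ 2 ≤ 4 * Fintype.card F := by exact_mod_cast hHasse
  rw [hcount']
  refine abs_le_of_sq_le_sq ?_ (by positivity)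
  rw [mul_pow, Real.sq_sqrt (by positivity)]
  linarith

theorem two_quadratics_count (p : ℕ) (hp : p.Prime) (hodd : p ≠ 2) (a b : ZMod p)
    (ha : a ≠ 0) (hb : b ≠ 0) (hab : a ≠ b) :
    |(Nat.card {t : ZMod p × ZMod p × ZMod p //
        t.1 ^ 2 + a = t.2.1 ^ 2 ∧ t.1 ^ 2 + b = t.2.2 ^ 2} : ℝ) - ((p : ℝ) - 3)| ≤
      2 * Real.sqrt p := by
  have : Fact p.Prime := ⟨hp⟩
  simpa [ZMod.card] using
    two_quadratics_count_general (by rwa [ZMod.ringChar_zmod_n]) ha hb hab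
end
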